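/- Let n ≥ 1 and let V : ℝⁿ → ℝ be smooth. Set S_h = {(q,p) ∈ ℝⁿ × ℝⁿ : V(q) + ‖p‖²/2 = h} for h ∈ ℝ. Assume S_h is compact, that S_h is a regular level set (for every (q,p) ∈ S_h one has (∇V(q), p) ≠ (0,0)), and that S_h meets the zero section, i.e. there exists q₀ ∈ ℝⁿ with V(q₀) = h. Then there exist l > 0 and a nonconstant C² curve q : [0,l] → ℝⁿ such that q''(t) = −∇V(q(t)) for all t ∈ [0,l], q'(0) = 0, q'(l) = 0, and V(q(0)) + ‖q'(0)‖²/2 = h (a brake orbit on the energy level h). -/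

import Mathlib

open Set

/-!
Subtract `h` from the potential and make it equal to `1` outside a large ball; let `v` be the
result. Encode a path on `[0, 1]` with free ends by its starting point and its velocity `u`. Up to a
linear change of time, the brake orbits of energy zero are the critical points of positive value of
the Maupertuis functional `J = ‖u‖² / 2 * ∫ -v`: criticality makes the energy constant, and the free
ends make the velocity vanish at both of them.

Regularity provides a point `z₀` with `v z₀ < 0`. Then `J ≥ b > 0` on the paths that start at `z₀`
with `‖u‖ = r` small, while `J ≤ 0` on constant paths, on long uniform motions, and on short ones
that stay where `v = 1`. By the Poincaré–Bohl theorem, the half-space of uniform motions in a fixed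
direction cannot be pulled off the former set while `J ≤ 0` is kept fixed. So descent along the
gradient by steps of length at most `‖u‖` gets stuck, and this produces paths with `J` bounded and
bounded away from zero along which `‖u‖ * ‖∇J‖` tends to zero. Since `∇v` is bounded away from zero
near `v = 0`, their mean kinetic energy stays away from zero, so `‖u‖` stays bounded and the
Arzelà–Ascoli theorem gives a limit, which is the orbit.
-/

open MeasureTheory Metric Polynomial Filter Topology
open scoped RealInnerProductSpace NNReal Gradient

/-! ### The Poincaré–Bohl theorem -/

section Polynomial

variable {K : Type*} [Field K]

theorem exists_eval_eq_sum_of_infinite {s : Set K} (hs : s.Infinite) (N : ℕ) (x : K) :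
    ∃ (t : Finset K) (c : K → K), ↑t ⊆ s ∧
      ∀ p : K[X], p.natDegree ≤ N → p.eval x = ∑ y ∈ t, c y * p.eval y := by
  classical
  obtain ⟨t, hts, ht⟩ := hs.exists_subset_card_eq (N + 1)
  refine ⟨t, fun y => (Lagrange.basis t id y).eval x, hts, fun p hp => ?_⟩
  have hdeg : p.degree < t.card :=
    ht ▸ degree_le_natDegree.trans_lt (by exact_mod_cast Nat.lt_succ_of_le hp)
  conv_lhs => rw [Lagrange.eq_interpolate (injOn_id (t : Set K)) hdeg]
  simp [Lagrange.interpolate_apply, eval_finsetSum, mul_comm]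

theorem integral_eq_of_infinite_of_forall_eval {Z : Type*} [MeasurableSpace Z] {μ : Measure Z}
    {P : ℝ → Z → ℝ} {N : ℕ} {s : Set ℝ} {c : ℝ} (hs : s.Infinite)
    (hP : ∀ z, ∃ p : ℝ[X], p.natDegree ≤ N ∧ ∀ t, P t z = p.eval t)
    (hint : ∀ t ∈ s, Integrable (P t) μ) (hc : ∀ t ∈ s, ∫ z, P t z ∂μ = c) (t : ℝ) :
    ∫ z, P t z ∂μ = c := by
  obtain ⟨S, w, hSs, hw⟩ := exists_eval_eq_sum_of_infinite hs N t
  have hsum : ∀ z, P t z = ∑ y ∈ S, w y * P y z := fun z => by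
    obtain ⟨p, hdeg, hp⟩ := hP z
    simp only [hp, hw p hdeg]
  have hw_one : ∑ y ∈ S, w y = 1 := by simpa using (hw 1 (by simp)).symm
  calc ∫ z, P t z ∂μ = ∑ y ∈ S, w y * ∫ z, P y z ∂μ := by
        simp only [hsum, ← integral_const_mul]
        exact integral_finsetSum _ fun y hy => (hint y (hSs hy)).const_mul _
    _ = ∑ y ∈ S, w y * c := Finset.sum_congr rfl fun y hy => by rw [hc y (hSs hy)]
    _ = c := by rw [← Finset.sum_mul, hw_one, one_mul]

end Polynomial

section Determinant

variable {E : Type*} [NormedAddCommGroup E] [NormedSpace ℝ E]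

theorem exists_det_id_add_smul_eq_eval [FiniteDimensional ℝ E] (M : E →L[ℝ] E) :
    ∃ p : ℝ[X], p.natDegree ≤ Module.finrank ℝ E ∧
      ∀ t : ℝ, (ContinuousLinearMap.id ℝ E + t • M).det = p.eval t := by
  let b := Module.finBasis ℝ E
  let A := LinearMap.toMatrix b b (M : E →ₗ[ℝ] E)
  refine ⟨((X : ℝ[X]) • A.map C + (1 : Matrix _ _ ℝ).map C).det, ?_, fun t => ?_⟩
  · simpa using natDegree_det_X_add_C_le A 1
  have hmat : LinearMap.toMatrix b b ((ContinuousLinearMap.id ℝ E + t • M : E →L[ℝ] E) : E →ₗ[ℝ] E)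
      = 1 + t • A := by
    simp [A, map_add]
  rw [ContinuousLinearMap.det, ← LinearMap.det_toMatrix b, hmat, ← coe_evalRingHom, RingHom.map_det]
  congr 1
  ext i j
  have hone : eval t ((1 : Matrix _ _ ℝ[X]) i j) = (1 : Matrix _ _ ℝ) i j := by
    rcases eq_or_ne i j with rfl | hij <;> simp [*]
  simp only [Matrix.add_apply, Matrix.smul_apply, smul_eq_mul, map_zero, map_one, Matrix.map_one,
    RingHom.mapMatrix_apply, coe_evalRingHom, Matrix.map_apply, X_mul_C, eval_add, eval_mul,
    eval_C, eval_X, hone]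
  ring

theorem det_id_add_pos_of_norm_lt_one [FiniteDimensional ℝ E] {M : E →L[ℝ] E} (hM : ‖M‖ < 1) :
    0 < (ContinuousLinearMap.id ℝ E + M).det := by
  have hne : ∀ s ∈ Icc (0 : ℝ) 1, (ContinuousLinearMap.id ℝ E + s • M).det ≠ 0 := fun s hs => by
    have hnorm : ‖-(s • M)‖ < 1 := by
      rw [norm_neg, norm_smul, Real.norm_of_nonneg hs.1]
      exact (mul_le_of_le_one_left (norm_nonneg M) hs.2).trans_lt hM
    have hunit := isUnit_one_sub_of_norm_lt_one hnorm
    rw [sub_neg_eq_add] at hunit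
    exact (LinearMap.isUnit_det _ (hunit.map ContinuousLinearMap.toLinearMapRingHom)).ne_zero
  have hcont : Continuous fun s : ℝ => (ContinuousLinearMap.id ℝ E + s • M).det :=
    ContinuousLinearMap.continuous_det.comp (by fun_prop)
  by_contra! hneg
  obtain ⟨s, hs, hs0⟩ := intermediate_value_Icc' zero_le_one hcont.continuousOn
    (show (0 : ℝ) ∈ Icc _ _ by
      simpa [ContinuousLinearMap.det] using hneg)
  exact hne s hs hs0

end Determinant

section Lipschitz

variable {E F : Type*} [NormedAddCommGroup E] [NormedSpace ℝ E]

theorem exists_mem_segment_mem_frontier {s : Set E} {x y : E} (hx : x ∈ s) (hy : y ∉ s) :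
    ∃ z ∈ segment ℝ x y, z ∈ frontier s := by
  by_contra! hfr
  have hconn := (convex_segment (𝕜 := ℝ) x y).isPreconnected
  have hint := hconn.subset_of_closure_inter_subset (u := interior s) isOpen_interior
    ⟨x, left_mem_segment ℝ x y, by
      by_contra hxi
      exact hfr x (left_mem_segment ℝ x y) ⟨subset_closure hx, hxi⟩⟩
    fun z ⟨hz, hzseg⟩ => by
      by_contra hzi
      exact hfr z hzseg ⟨closure_mono interior_subset hz, hzi⟩
  exact hy (interior_subset (hint (right_mem_segment ℝ x y)))

theorem lipschitzWith_indicator_of_eq_zero_on_frontier [NormedAddCommGroup F] {s : Set E}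
    {f : E → F} {C : ℝ≥0} (hs : IsClosed s) (hf : LipschitzOnWith C f s)
    (hfr : ∀ x ∈ frontier s, f x = 0) : LipschitzWith C (s.indicator f) := by
  have hcross : ∀ x ∈ s, ∀ y ∉ s, dist (f x) 0 ≤ C * dist x y := fun x hx y hy => by
    obtain ⟨z, hz, hzf⟩ := exists_mem_segment_mem_frontier hx hy
    calc dist (f x) 0 = dist (f x) (f z) := by rw [hfr z hzf]
      _ ≤ C * dist x z := hf.dist_le_mul x hx z (hs.frontier_subset hzf)
      _ ≤ C * dist x y := by
        gcongr
        exact (le_add_of_nonneg_right dist_nonneg).trans (dist_add_dist_of_mem_segment hz).le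
  refine LipschitzWith.of_dist_le_mul fun x y => ?_
  by_cases hx : x ∈ s <;> by_cases hy : y ∈ s
  · simpa [hx, hy] using hf.dist_le_mul x hx y hy
  · simpa [hx, hy] using hcross x hx y hy
  · simpa [hx, hy, dist_comm] using hcross y hy x hx
  · simp only [indicator_of_notMem, hx, hy, not_false_eq_true, dist_self]
    positivity

theorem bijective_id_add_of_lipschitzWith [CompleteSpace E] {f : E → E} {C : ℝ≥0}
    (hf : LipschitzWith C f) (hC : C < 1) : Function.Bijective fun x => x + f x := by
  rcases subsingleton_or_nontrivial E with hE | hE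
  · exact ⟨Function.injective_of_subsingleton _, Function.surjective_to_subsingleton _⟩
  refine ⟨(AntilipschitzWith.id.add_lipschitzWith hf (by simpa using hC)).injective, ?_⟩
  refine ApproximatesLinearOn.surjective (f' := ContinuousLinearEquiv.refl ℝ E) (c := C) ?_
    (.inr (by simpa [ContinuousLinearEquiv.refl_symm] using hC))
  rw [ApproximatesLinearOn.approximatesLinearOn_iff_lipschitzOnWith]
  convert! hf.lipschitzOnWith (s := univ)
  ext x
  simp

theorem image_eq_self_of_bijective_of_eqOn_compl {α : Type*} {f : α → α} {s : Set α}
    (hf : Function.Bijective f) (hs : EqOn f id sᶜ) : f '' s = s := by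
  rw [← compl_inj_iff, ← image_compl_eq hf, hs.image_eq, image_id]

end Lipschitz

section NoRetraction

variable {E : Type*} [NormedAddCommGroup E]

theorem setIntegral_det_fderiv_eq_of_image_eq [NormedSpace ℝ E] [FiniteDimensional ℝ E]
    [MeasurableSpace E] [BorelSpace E] (μ : Measure E) [μ.IsAddHaarMeasure] {f : E → E}
    {f' : E → E →L[ℝ] E} {s : Set E} (hs : MeasurableSet s)
    (hf' : ∀ x ∈ s, HasFDerivWithinAt f (f' x) s x) (hinj : InjOn f s) (himage : f '' s = s)
    (hdet : ∀ x ∈ s, 0 < (f' x).det) : ∫ x in s, (f' x).det ∂μ = μ.real s := by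
  have hchange := integral_image_eq_integral_abs_det_fderiv_smul μ hs hf' hinj fun _ => (1 : ℝ)
  rw [himage, setIntegral_const, smul_eq_mul, mul_one] at hchange
  rw [hchange]
  exact setIntegral_congr_fun hs fun x hx => by simp [abs_of_pos (hdet x hx)]

/-- Milnor and Rogers' observation: for small `t` the map `id + t • h` is a bijection of the ball,
so the integral is its volume; being polynomial in `t`, the integral does not depend on `t`. -/
theorem setIntegral_det_id_add_smul_fderiv [NormedSpace ℝ E] [FiniteDimensional ℝ E]
    [MeasurableSpace E] [BorelSpace E] (μ : Measure E) [μ.IsAddHaarMeasure] {h : E → E} {R : ℝ}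
    (hh : ContDiff ℝ 1 h) (hsphere : ∀ x, ‖x‖ = R → h x = 0) (t : ℝ) :
    ∫ x in closedBall 0 R, (ContinuousLinearMap.id ℝ E + t • fderiv ℝ h x).det ∂μ
      = μ.real (closedBall 0 R) := by
  have hdiff : Differentiable ℝ h := hh.differentiable one_ne_zero
  have hcont : Continuous (fderiv ℝ h) := hh.continuous_fderiv one_ne_zero
  obtain ⟨C, hC⟩ := (isCompact_closedBall (0 : E) R).exists_bound_of_continuousOn hcont.continuousOn
  set L : ℝ≥0 := C.toNNReal + 1 with hL
  have hbound : ∀ x ∈ closedBall (0 : E) R, ‖fderiv ℝ h x‖₊ ≤ L := fun x hx =>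
    (NNReal.le_toNNReal_of_coe_le (hC x hx)).trans (by simp [hL])
  have hlip : LipschitzWith L ((closedBall 0 R).indicator h) :=
    lipschitzWith_indicator_of_eq_zero_on_frontier isClosed_closedBall
      ((convex_closedBall 0 R).lipschitzOnWith_of_nnnorm_fderiv_le (fun x _ => hdiff x) hbound)
      fun x hx => hsphere x (by simpa using frontier_closedBall_subset_sphere hx)
  have hLpos : (0 : ℝ) < L := by positivity
  refine integral_eq_of_infinite_of_forall_eval (s := Ioo 0 (L : ℝ)⁻¹)
    (Ioo_infinite (by positivity)) (fun x => exists_det_id_add_smul_eq_eval _)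
    (fun s _ => (ContinuousLinearMap.continuous_det.comp
      (by fun_prop)).continuousOn.integrableOn_compact (isCompact_closedBall 0 R))
    (fun s hs => ?_) t
  have hsL : s * L < 1 := by rw [← lt_div_iff₀ hLpos, one_div]; exact hs.2
  have hbij := bijective_id_add_of_lipschitzWith (f := fun x => s • (closedBall 0 R).indicator h x)
    (C := ‖s‖₊ * L) ((lipschitzWith_smul s).comp hlip)
    (by rw [← NNReal.coe_lt_coe]; simpa [abs_of_pos hs.1] using hsL)
  refine setIntegral_det_fderiv_eq_of_image_eq μ isClosed_closedBall.measurableSet (fun x hx => ?_)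
    hbij.injective.injOn
    (image_eq_self_of_bijective_of_eqOn_compl hbij fun x hx => by simp [indicator_of_notMem hx])
    fun x hx => det_id_add_pos_of_norm_lt_one ?_
  · exact ((hasFDerivAt_id x).add ((hdiff x).hasFDerivAt.const_smul s)).hasFDerivWithinAt.congr
      (fun y hy => by simp [indicator_of_mem hy]) (by simp [indicator_of_mem hx])
  · rw [norm_smul, Real.norm_of_nonneg hs.1.le]
    exact (mul_le_mul_of_nonneg_left (NNReal.coe_le_coe.mpr (hbound x hx)) hs.1.le).trans_lt hsL

variable [InnerProductSpace ℝ E] [FiniteDimensional ℝ E]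

theorem det_eq_zero_of_hasFDerivAt_of_norm_eq {r : E → E} {r' : E →L[ℝ] E} {z : E} {R : ℝ}
    (hR : R ≠ 0) (hr : HasFDerivAt r r' z) (hnorm : ∀ x, ‖r x‖ = R) : r'.det = 0 := by
  have horth : ∀ x, ⟪r z, r' x⟫ = 0 := fun x => by
    have hderiv := hr.inner ℝ hr
    simp only [real_inner_self_eq_norm_sq, hnorm] at hderiv
    have hzero := DFunLike.congr_fun (hderiv.unique (hasFDerivAt_const (R ^ 2) z)) x
    simp only [ContinuousLinearMap.comp_apply, ContinuousLinearMap.prod_apply, fderivInnerCLM_apply,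
      real_inner_comm, zero_apply] at hzero
    linarith
  by_contra hdet
  obtain ⟨x, hx⟩ := (LinearMap.equivOfDetNeZero (r' : E →ₗ[ℝ] E) hdet).surjective (r z)
  have hself := horth x
  rw [show r' x = r z from hx, real_inner_self_eq_norm_sq, hnorm] at hself
  exact hR (pow_eq_zero_iff two_ne_zero |>.mp hself)

theorem not_exists_contDiff_retraction_sphere {R : ℝ} (hR : 0 < R) :
    ¬∃ r : E → E, ContDiff ℝ 1 r ∧ (∀ x, ‖r x‖ = R) ∧ ∀ x, ‖x‖ = R → r x = x := by
  rintro ⟨r, hr, hnorm, hfix⟩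
  let : MeasurableSpace E := borel E
  have : BorelSpace E := ⟨rfl⟩
  have hvol := setIntegral_det_id_add_smul_fderiv Measure.addHaar (hr.sub contDiff_fun_id)
    (fun x hx => by simp [hfix x hx]) 1 (R := R)
  have hdet : ∀ x, (ContinuousLinearMap.id ℝ E + (1 : ℝ) • fderiv ℝ (fun x => r x - x) x).det = 0 :=
    fun x => by
      rw [one_smul, fderiv_fun_sub (hr.differentiable one_ne_zero x) differentiableAt_fun_id,
        fderiv_fun_id, add_sub_cancel]
      exact det_eq_zero_of_hasFDerivAt_of_norm_eq hR.ne'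
        (hr.differentiable one_ne_zero x).hasFDerivAt hnorm
  refine (ENNReal.toReal_pos (measure_closedBall_pos Measure.addHaar (0 : E) hR).ne'
    measure_closedBall_lt_top.ne).ne' ?_
  rw [← measureReal_def, ← hvol]
  simp only [hdet, integral_zero]

theorem not_exists_continuous_ne_zero_eqOn_norm_ge (R : ℝ) :
    ¬∃ f : E → E, Continuous f ∧ (∀ x, f x ≠ 0) ∧ ∀ x, R ≤ ‖x‖ → f x = x := by
  rintro ⟨f, hf, hne, hfix⟩
  set R' := max R 0 + 1
  have hR'pos : 0 < R' := by positivity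
  obtain ⟨g, hg, hgf, hgS, -⟩ := hf.exists_contDiff_approx_and_eqOn 1 hf.norm
    (fun x => norm_pos_iff.mpr (hne x)) (S := {x : E | R' ≤ ‖x‖}) (U := {x : E | R < ‖x‖})
    (isClosed_le continuous_const continuous_norm)
    ((isOpen_lt continuous_const continuous_norm).mem_nhdsSet.mpr fun x hx =>
      ((le_max_left R 0).trans_lt (lt_add_one _)).trans_le hx)
    (contDiffOn_id.congr fun x hx => hfix x (le_of_lt hx))
  have hg_ne : ∀ x, g x ≠ 0 := fun x hx => by simpa [hx] using hgf x
  refine not_exists_contDiff_retraction_sphere hR'pos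
    ⟨fun x => (R' / ‖g x‖) • g x, ?_, fun x => ?_, fun x hx => ?_⟩
  · exact (contDiff_const.div (hg.norm ℝ hg_ne) fun x => norm_ne_zero_iff.mpr (hg_ne x)).smul hg
  · rw [norm_smul, norm_div, norm_norm, Real.norm_of_nonneg hR'pos.le,
      div_mul_cancel₀ _ (norm_ne_zero_iff.mpr (hg_ne x))]
  · have hgx : g x = x := (hgS hx.ge).trans
      (hfix x (hx ▸ (le_max_left R 0).trans (lt_add_one _).le))
    simp [hgx, hx, hR'pos.ne']

theorem smul_add_smul_ne_zero_of_not_sameRay {M : Type*} [AddCommGroup M] [Module ℝ M] {u x : M}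
    {a b : ℝ} (ha : 0 ≤ a) (hb : 0 < b) (h : ¬SameRay ℝ u (-x)) : a • u + b • x ≠ 0 := by
  intro hzero
  have hopp : a • u = b • -x := by rwa [smul_neg, eq_neg_iff_add_eq_zero]
  rcases ha.eq_or_lt with rfl | ha
  · have hx : x = 0 := by simpa [hb.ne'] using hzero
    exact h (by simp [hx])
  · exact h (.inr (.inr ⟨a, b, ha, hb, hopp⟩))

/-- The **Poincaré–Bohl theorem**. -/
theorem exists_mem_closedBall_eq_zero_of_not_sameRay {f : E → E} {R : ℝ}
    (hf : Continuous f) (hR : 0 < R) (hray : ∀ x, ‖x‖ = R → ¬SameRay ℝ (f x) (-x)) :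
    ∃ x ∈ closedBall 0 R, f x = 0 := by
  by_contra! hne
  let c : E → ℝ := fun x => R / max R ‖x‖
  let s : E → ℝ := fun x => max (min 1 (‖x‖ / R - 1)) 0
  have hc : Continuous c := continuous_const.div (by fun_prop) fun x => (lt_max_of_lt_left hR).ne'
  have hs : Continuous s := by fun_prop
  refine not_exists_continuous_ne_zero_eqOn_norm_ge (2 * R)
    ⟨fun x => (1 - s x) • f (c x • x) + s x • x, by fun_prop, fun x => ?_, fun x hx => ?_⟩
  · rcases le_or_gt ‖x‖ R with hx | hx
    · have hsx : s x = 0 := max_eq_right <| min_le_of_right_le <| by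
        rwa [sub_nonpos, div_le_one hR]
      have hcx : c x = 1 := by simp [c, max_eq_left hx, hR.ne']
      simpa [hsx, hcx] using hne x (by simpa using hx)
    · have hxpos : 0 < ‖x‖ := hR.trans hx
      have hcx : c x = R / ‖x‖ := by simp [c, max_eq_right hx.le]
      have hcnorm : ‖c x • x‖ = R := by
        rw [norm_smul, hcx, norm_div, norm_norm, Real.norm_of_nonneg hR.le,
          div_mul_cancel₀ _ hxpos.ne']
      have hspos : 0 < s x := lt_max_of_lt_left <| lt_min one_pos <| by
        rwa [sub_pos, one_lt_div hR]
      have hsmul : s x • x = (s x * (‖x‖ / R)) • (c x • x) := by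
        rw [smul_smul, hcx, mul_assoc, div_mul_div_cancel₀ hR.ne', div_self hxpos.ne', mul_one]
      beta_reduce
      rw [hsmul]
      exact smul_add_smul_ne_zero_of_not_sameRay
        (sub_nonneg.mpr (max_le (min_le_left _ _) zero_le_one)) (by positivity) (hray _ hcnorm)
  · have hsx : s x = 1 := by
      have : 1 ≤ ‖x‖ / R - 1 := by rw [le_sub_iff_add_le, le_div_iff₀ hR]; linarith
      simp [s, this]
    simp [hsx]

end NoRetraction

/-! ### Gradient descent and linking -/

/-- A functional `J` with gradient field `g` that can be deformed by steps of length at most `ω`: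
the remainder of the first-order expansion of `J` is quadratic, uniformly on sublevel sets of the
scale function `ω`. -/
structure IsDescentField {X : Type*} [SeminormedAddCommGroup X] [InnerProductSpace ℝ X]
    (J : X → ℝ) (g : X → X) (ω : X → ℝ) : Prop where
  continuous_functional : Continuous J
  continuous_gradient : Continuous g
  lipschitzWith_scale : LipschitzWith 1 ω
  scale_nonneg : ∀ x, 0 ≤ ω x
  exists_le_add_inner_add : ∀ S, ∃ L, ∀ x δ, ω x ≤ S → ‖δ‖ ≤ ω x →
    J (x + δ) ≤ J x + ⟪g x, δ⟫ + L * ‖δ‖ ^ 2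

/-- The step length of `descentMap`: proportional to `s`, cut off where `J ≤ a`, and normalized so
that the displacement is at most `s * ω x / 2`. -/
noncomputable def descentRate {X : Type*} [Norm X] (J : X → ℝ) (g : X → X) (ω : X → ℝ) (a s : ℝ)
    (x : X) : ℝ :=
  s * min 1 (max 0 (J x - a)) * (ω x ^ 2 / (1 + (ω x * ‖g x‖) ^ 2))

theorem descentRate_nonneg {X : Type*} [Norm X] {J : X → ℝ} {g : X → X} {ω : X → ℝ} {a s : ℝ}
    (hs : 0 ≤ s) (x : X) : 0 ≤ descentRate J g ω a s x := by
  unfold descentRate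
  positivity

/-- One step of size `s` of the gradient descent of `J` that leaves the sublevel set `J ≤ a`
pointwise fixed. -/
noncomputable def descentMap {X : Type*} [SeminormedAddCommGroup X] [InnerProductSpace ℝ X]
    (J : X → ℝ) (g : X → X) (ω : X → ℝ) (a s : ℝ) (x : X) : X :=
  x + -(descentRate J g ω a s x • g x)

section Descent

variable {X : Type*} [SeminormedAddCommGroup X] [InnerProductSpace ℝ X] {J : X → ℝ} {g : X → X}
  {ω : X → ℝ} {a b s : ℝ}

theorem descentMap_eq_self {x : X} (hx : J x ≤ a) : descentMap J g ω a s x = x := by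
  simp [descentMap, descentRate, sub_nonpos.mpr hx]

namespace IsDescentField

theorem continuous_descentMap (h : IsDescentField J g ω) : Continuous (descentMap J g ω a s) := by
  have hJ := h.continuous_functional
  have hg := h.continuous_gradient
  have hω := h.lipschitzWith_scale.continuous
  unfold descentMap descentRate
  fun_prop (disch := intro; positivity)

theorem norm_descentRate_smul_le (h : IsDescentField J g ω) (hs : 0 ≤ s) (x : X) :
    ‖-(descentRate J g ω a s x • g x)‖ ≤ s / 2 * ω x := by
  have hω := h.scale_nonneg x
  set y := ω x * ‖g x‖ with hy
  have hhalf : y / (1 + y ^ 2) ≤ 1 / 2 := by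
    rw [div_le_div_iff₀ (by positivity) two_pos]
    linarith [two_mul_le_add_sq 1 y]
  calc ‖-(descentRate J g ω a s x • g x)‖
      = s * min 1 (max 0 (J x - a)) * ω x * (y / (1 + y ^ 2)) := by
        rw [norm_neg, norm_smul, Real.norm_of_nonneg (descentRate_nonneg hs x), descentRate, ← hy]
        simp only [hy]
        ring
    _ ≤ s * 1 * ω x * (1 / 2) := by gcongr; exact min_le_left _ _
    _ = s / 2 * ω x := by ring

theorem scale_descentMap_le (h : IsDescentField J g ω) (hs : 0 ≤ s) (x : X) :
    ω (descentMap J g ω a s x) ≤ (1 + s) * ω x := by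
  have hlip := h.lipschitzWith_scale.dist_le_mul (descentMap J g ω a s x) x
  rw [Real.dist_eq, dist_eq_norm, descentMap, add_sub_cancel_left, NNReal.coe_one, one_mul] at hlip
  have hω := h.scale_nonneg x
  have := (le_abs_self _).trans (hlip.trans (h.norm_descentRate_smul_le hs x))
  rw [descentMap]
  nlinarith

theorem descentMap_le_sub {S L : ℝ} (h : IsDescentField J g ω) (hL : 0 ≤ L)
    (hstep : ∀ x δ, ω x ≤ S → ‖δ‖ ≤ ω x → J (x + δ) ≤ J x + ⟪g x, δ⟫ + L * ‖δ‖ ^ 2)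
    (hs : 0 ≤ s) (hs1 : s ≤ 1) (hsL : s * (L * S ^ 2) ≤ 1 / 2) {x : X} (hx : ω x ≤ S) :
    J (descentMap J g ω a s x) ≤ J x - s / 2 * min 1 (max 0 (J x - a))
      * ((ω x * ‖g x‖) ^ 2 / (1 + (ω x * ‖g x‖) ^ 2)) := by
  have hω := h.scale_nonneg x
  set θ := min 1 (max 0 (J x - a)) with hθ
  have : 0 ≤ θ := by positivity
  have hθ1 : θ ≤ 1 := min_le_left _ _
  set y := ω x * ‖g x‖ with hy
  set τ := descentRate J g ω a s x with hτ
  set Q := s * θ * (y ^ 2 / (1 + y ^ 2)) with hQ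
  have hrate : τ * ‖g x‖ ^ 2 = Q := by
    simp only [hτ, descentRate, ← hy, ← hθ, hQ]
    simp only [hy]
    ring
  have hτS : τ ≤ s * S ^ 2 := by
    calc τ = s * θ * (ω x ^ 2 / (1 + y ^ 2)) := rfl
      _ ≤ s * 1 * (S ^ 2 / 1) := by
        gcongr
        nlinarith
      _ = s * S ^ 2 := by ring
  have : 0 ≤ Q := by positivity
  have hδ := (h.norm_descentRate_smul_le (a := a) hs x).trans
    (by nlinarith : s / 2 * ω x ≤ ω x)
  calc J (descentMap J g ω a s x)
      ≤ J x + ⟪g x, -(τ • g x)⟫ + L * ‖-(τ • g x)‖ ^ 2 := hstep x _ hx hδ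
    _ = J x - Q + L * τ * Q := by
        rw [inner_neg_right, inner_smul_right, real_inner_self_eq_norm_sq, hrate, norm_neg,
          norm_smul, mul_pow, Real.norm_eq_abs, sq_abs, ← hrate]
        ring
    _ ≤ J x - Q + 1 / 2 * Q := by
        gcongr
        nlinarith [mul_le_mul_of_nonneg_left hτS hL]
    _ = _ := by rw [hQ]; ring

theorem scale_iterate_descentMap_le (h : IsDescentField J g ω) (hs : 0 ≤ s) (k : ℕ) (x : X) :
    ω ((descentMap J g ω a s)^[k] x) ≤ Real.exp (k * s) * ω x := by
  induction k with
  | zero => simp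
  | succ k ih =>
    rw [Function.iterate_succ_apply']
    calc ω (descentMap J g ω a s ((descentMap J g ω a s)^[k] x))
        ≤ (1 + s) * ω ((descentMap J g ω a s)^[k] x) := h.scale_descentMap_le hs _
      _ ≤ Real.exp s * (Real.exp (k * s) * ω x) := by
        gcongr
        · exact h.scale_nonneg _
        · linarith [Real.add_one_le_exp s]
      _ = Real.exp ((k + 1 : ℕ) * s) * ω x := by
        rw [← mul_assoc, ← Real.exp_add]
        push_cast
        ring_nf

theorem iterate_descentMap_le {S α c : ℝ} {N : ℕ} {x : X}
    (hdescent : ∀ z, ω z ≤ S → J z ≤ α → J (descentMap J g ω a s z) ≤ J z ∧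
      (b ≤ J z → J (descentMap J g ω a s z) ≤ J z - c))
    (hω : ∀ k ≤ N, ω ((descentMap J g ω a s)^[k] x) ≤ S) (hx : J x ≤ α) :
    ∀ k ≤ N, J ((descentMap J g ω a s)^[k] x) ≤ α ∧
      (J ((descentMap J g ω a s)^[k] x) < b ∨ J ((descentMap J g ω a s)^[k] x) ≤ α - k * c) := by
  intro k hk
  induction k with
  | zero => simp [hx]
  | succ k ih =>
    obtain ⟨hα, hk'⟩ := ih (by omega)
    obtain ⟨hmono, hdrop⟩ := hdescent _ (hω k (by omega)) hα
    rw [Function.iterate_succ_apply']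
    refine ⟨hmono.trans hα, ?_⟩
    rcases lt_or_ge (J ((descentMap J g ω a s)^[k] x)) b with hb | hb
    · exact .inl (hmono.trans_lt hb)
    · refine .inr ((hdrop hb).trans ?_)
      push_cast
      linarith [hk'.resolve_left hb.not_gt]

theorem exists_descentMap_le_sub {α ε : ℝ} (h : IsDescentField J g ω) (hab : a < b) (hε : 0 < ε)
    (hgrad : ∀ x, b ≤ J x → J x ≤ α → ε ≤ ω x * ‖g x‖) :
    ∃ c > 0, ∀ S, ∃ s₀ > 0, ∀ s, 0 ≤ s → s ≤ s₀ → ∀ x, ω x ≤ S → J x ≤ α →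
      J (descentMap J g ω a s x) ≤ J x ∧ (b ≤ J x → J (descentMap J g ω a s x) ≤ J x - s * c) := by
  have : 0 < min 1 (b - a) := lt_min one_pos (sub_pos.mpr hab)
  refine ⟨1 / 2 * min 1 (b - a) * (ε ^ 2 / (1 + ε ^ 2)), by positivity, fun S => ?_⟩
  obtain ⟨L, hL⟩ := h.exists_le_add_inner_add S
  have hL' : ∀ x δ, ω x ≤ S → ‖δ‖ ≤ ω x → J (x + δ) ≤ J x + ⟪g x, δ⟫ + |L| * ‖δ‖ ^ 2 :=
    fun x δ hx hδ => (hL x δ hx hδ).trans (by gcongr; exact le_abs_self L)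
  refine ⟨min 1 (1 / 2 / (|L| * S ^ 2 + 1)), by positivity, fun s hs hs₀ x hx hxα => ?_⟩
  obtain ⟨hs1, hsL⟩ := le_min_iff.mp hs₀
  rw [le_div_iff₀ (by positivity)] at hsL
  have hle := h.descentMap_le_sub (a := a) (abs_nonneg L) hL' hs hs1 (by linarith) hx
  refine ⟨hle.trans (sub_le_self _ (by positivity)), fun hb => hle.trans ?_⟩
  have hratio : ε ^ 2 / (1 + ε ^ 2) ≤ (ω x * ‖g x‖) ^ 2 / (1 + (ω x * ‖g x‖) ^ 2) := by
    rw [div_le_div_iff₀ (by positivity) (by positivity)]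
    nlinarith [hgrad x hb hxα]
  calc J x - s / 2 * min 1 (max 0 (J x - a)) * ((ω x * ‖g x‖) ^ 2 / (1 + (ω x * ‖g x‖) ^ 2))
      ≤ J x - s / 2 * min 1 (b - a) * (ε ^ 2 / (1 + ε ^ 2)) := by
        gcongr
        exact le_max_of_le_right (by linarith)
    _ = _ := by ring

theorem exists_deformation {α ε : ℝ} (h : IsDescentField J g ω) (hab : a < b) (hε : 0 < ε)
    (hgrad : ∀ x, b ≤ J x → J x ≤ α → ε ≤ ω x * ‖g x‖) (S : ℝ) :
    ∃ η : X → X, Continuous η ∧ (∀ x, J x ≤ a → η x = x) ∧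
      ∀ x, ω x ≤ S → J x ≤ α → J (η x) < b := by
  obtain ⟨c, hc, hdescent⟩ := h.exists_descentMap_le_sub hab hε hgrad
  set T := (|α - b| + 1) / c
  have : 0 < T := by positivity
  obtain ⟨s₀, hs₀, hdescent⟩ := hdescent (Real.exp T * |S|)
  obtain ⟨N, hN⟩ := exists_nat_gt (T / s₀)
  have hNpos : (0 : ℝ) < N := lt_trans (by positivity) hN
  set s := T / N with hs
  have hspos : 0 < s := by positivity
  have hNs : N * s = T := mul_div_cancel₀ _ hNpos.ne'
  have hs_le : s ≤ s₀ := by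
    rw [hs, div_le_iff₀ hNpos]
    exact ((div_lt_iff₀' hs₀).mp hN).le
  refine ⟨(descentMap J g ω a s)^[N], h.continuous_descentMap.iterate N,
    fun x hx => Function.iterate_fixed (descentMap_eq_self hx) N, fun x hxS hxα => ?_⟩
  have hω : ∀ k ≤ N, ω ((descentMap J g ω a s)^[k] x) ≤ Real.exp T * |S| := fun k hk =>
    (h.scale_iterate_descentMap_le hspos.le k x).trans <| by
      rw [← hNs]
      gcongr
      exacts [h.scale_nonneg x, hxS.trans (le_abs_self S)]
  rcases (iterate_descentMap_le (hdescent s hspos.le hs_le) hω hxα N le_rfl).2 with hlt | hle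
  · exact hlt
  · have hdrop : N * (s * c) = |α - b| + 1 := by rw [← mul_assoc, hNs, div_mul_cancel₀ _ hc.ne']
    linarith [le_abs_self (α - b)]

theorem exists_almost_critical_of_linking {Z : Type*} [NormedAddCommGroup Z]
    [InnerProductSpace ℝ Z] [FiniteDimensional ℝ Z] {Φ : Z → X} {ψ : X → Z} {R α ε : ℝ}
    (h : IsDescentField J g ω) (hab : a < b) (hε : 0 < ε) (hΦ : Continuous Φ) (hψ : Continuous ψ)
    (hR : 0 < R) (hray : ∀ z, ‖z‖ = R → ¬SameRay ℝ (ψ (Φ z)) (-z))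
    (hsphere : ∀ z, ‖z‖ = R → J (Φ z) ≤ a) (hball : ∀ z ∈ closedBall 0 R, J (Φ z) ≤ α)
    (hψb : ∀ x, ψ x = 0 → b ≤ J x) :
    ∃ x, b ≤ J x ∧ J x ≤ α ∧ ω x * ‖g x‖ < ε := by
  by_contra! hgrad
  obtain ⟨S, hS⟩ := (isCompact_closedBall (0 : Z) R).bddAbove_image
    (h.lipschitzWith_scale.continuous.comp hΦ).continuousOn
  obtain ⟨η, hη, hfix, hbelow⟩ := h.exists_deformation hab hε hgrad S
  obtain ⟨z, hz, hzero⟩ := exists_mem_closedBall_eq_zero_of_not_sameRay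
    (f := fun z => ψ (η (Φ z))) (by fun_prop) hR
    fun z hz => by simpa only [hfix _ (hsphere z hz)] using hray z hz
  exact (hbelow _ (hS (mem_image_of_mem _ hz)) (hball z hz)).not_ge (hψb _ hzero)

end IsDescentField

end Descent

/-! ### Paths -/

/-- Continuous curves in `F`, with the `L²(0,1)` inner product. It is degenerate: the values of the
curve outside `[0,1]` are irrelevant. -/
def Velocity (F : Type*) [NormedAddCommGroup F] : Type _ := C(ℝ, F)

namespace Velocity

section Space

variable {F : Type*} [NormedAddCommGroup F]

instance : FunLike (Velocity F) ℝ F := inferInstanceAs (FunLike C(ℝ, F) ℝ F)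

instance : ContinuousMapClass (Velocity F) ℝ F := inferInstanceAs (ContinuousMapClass C(ℝ, F) ℝ F)

instance : AddCommGroup (Velocity F) := inferInstanceAs (AddCommGroup C(ℝ, F))

@[simp] theorem zero_apply (t : ℝ) : (0 : Velocity F) t = 0 := rfl

@[simp] theorem add_apply (u w : Velocity F) (t : ℝ) : (u + w) t = u t + w t := rfl

@[simp] theorem sub_apply (u w : Velocity F) (t : ℝ) : (u - w) t = u t - w t := rfl

/-- A continuous curve, as an element of `Velocity F`. -/
def ofContinuousMap (f : C(ℝ, F)) : Velocity F := f

/-- The speed of a curve, as a curve in `ℝ`. -/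
def speed (u : Velocity F) : Velocity ℝ := ofContinuousMap ⟨fun t => ‖u t‖, by fun_prop⟩

@[simp] theorem speed_apply (u : Velocity F) (t : ℝ) : speed u t = ‖u t‖ := rfl

/-- A constant curve. -/
def const (a : F) : Velocity F := ofContinuousMap (.const ℝ a)

@[simp] theorem const_apply (a : F) (t : ℝ) : const a t = a := rfl

variable [InnerProductSpace ℝ F]

instance : Module ℝ (Velocity F) := inferInstanceAs (Module ℝ C(ℝ, F))

@[simp] theorem smul_apply (c : ℝ) (u : Velocity F) (t : ℝ) : (c • u) t = c • u t := rfl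

/-- The inner product of `L²(0,1)` on continuous curves. -/
@[reducible]
noncomputable def innerCore : PreInnerProductSpace.Core ℝ (Velocity F) where
  inner u w := ∫ t in (0 : ℝ)..1, ⟪u t, w t⟫
  conj_inner_symm u w := by simp only [conj_trivial, real_inner_comm]
  re_inner_nonneg u :=
    intervalIntegral.integral_nonneg zero_le_one fun t _ => real_inner_self_nonneg
  add_left u w y := by
    simp only [add_apply, inner_add_left]
    apply intervalIntegral.integral_add <;>
      exact Continuous.intervalIntegrable (by fun_prop) _ _
  smul_left u w c := by
    simp only [smul_apply, real_inner_smul_left, conj_trivial, intervalIntegral.integral_const_mul]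

noncomputable instance : SeminormedAddCommGroup (Velocity F) :=
  @InnerProductSpace.Core.toSeminormedAddCommGroup ℝ _ _ _ _ innerCore

noncomputable instance : InnerProductSpace ℝ (Velocity F) := InnerProductSpace.ofCore innerCore

theorem inner_def (u w : Velocity F) : ⟪u, w⟫ = ∫ t in (0 : ℝ)..1, ⟪u t, w t⟫ := rfl

theorem norm_sq_eq_integral (u : Velocity F) : ‖u‖ ^ 2 = ∫ t in (0 : ℝ)..1, ‖u t‖ ^ 2 := by
  simp only [← real_inner_self_eq_norm_sq, inner_def]

theorem norm_le_of_forall_mem_Icc {u : Velocity F} {M : ℝ} (hM : 0 ≤ M)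
    (hu : ∀ t ∈ Icc (0 : ℝ) 1, ‖u t‖ ≤ M) : ‖u‖ ≤ M := by
  refine le_of_sq_le_sq ?_ hM
  calc ‖u‖ ^ 2 ≤ ∫ _ in (0 : ℝ)..1, M ^ 2 := by
        rw [norm_sq_eq_integral]
        refine intervalIntegral.integral_mono_on zero_le_one
          (Continuous.intervalIntegrable (by fun_prop) _ _) intervalIntegrable_const fun t ht => ?_
        gcongr
        exact hu t ht
    _ = M ^ 2 := by simp

theorem apply_eq_zero_of_norm_eq_zero {u : Velocity F} (hu : ‖u‖ = 0) {t : ℝ}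
    (ht : t ∈ Icc (0 : ℝ) 1) : u t = 0 := by
  by_contra hne
  have hpos : 0 < ∫ t in (0 : ℝ)..1, ‖u t‖ ^ 2 :=
    intervalIntegral.integral_pos zero_lt_one (by fun_prop) (fun _ _ => by positivity)
      ⟨t, ht, by positivity⟩
  rw [← norm_sq_eq_integral, hu] at hpos
  norm_num at hpos

@[simp] theorem norm_speed (u : Velocity F) : ‖speed u‖ = ‖u‖ :=
  (sq_eq_sq₀ (norm_nonneg _) (norm_nonneg _)).mp <| by
    simp only [norm_sq_eq_integral, speed_apply, norm_norm]

theorem integral_norm_mul_norm_le (u w : Velocity F) :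
    ∫ t in (0 : ℝ)..1, ‖u t‖ * ‖w t‖ ≤ ‖u‖ * ‖w‖ := by
  calc ∫ t in (0 : ℝ)..1, ‖u t‖ * ‖w t‖ = ⟪speed u, speed w⟫ := by
        simp only [inner_def, speed_apply, Real.inner_apply]
    _ ≤ ‖speed u‖ * ‖speed w‖ := real_inner_le_norm _ _
    _ = ‖u‖ * ‖w‖ := by simp only [norm_speed]

theorem norm_integral_le (u : Velocity F) {t : ℝ} (ht : t ∈ Icc (0 : ℝ) 1) :
    ‖∫ s in (0 : ℝ)..t, u s‖ ≤ ‖u‖ := by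
  have hone : ‖const (1 : ℝ)‖ ≤ 1 :=
    norm_le_of_forall_mem_Icc zero_le_one fun t _ => norm_one.le
  calc ‖∫ s in (0 : ℝ)..t, u s‖ ≤ ∫ s in (0 : ℝ)..t, ‖u s‖ :=
        intervalIntegral.norm_integral_le_integral_norm ht.1
    _ ≤ ∫ s in (0 : ℝ)..1, ‖u s‖ :=
        intervalIntegral.integral_mono_interval le_rfl ht.1 ht.2
          (.of_forall fun _ => norm_nonneg _) (Continuous.intervalIntegrable (by fun_prop) _ _)
    _ = ⟪const (1 : ℝ), speed u⟫ := by
        simp only [inner_def, const_apply, speed_apply, Real.inner_apply, one_mul]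
    _ ≤ 1 * ‖speed u‖ := (real_inner_le_norm _ _).trans (by gcongr)
    _ = ‖u‖ := by rw [one_mul, norm_speed]

theorem continuous_ofContinuousMap : Continuous (ofContinuousMap (F := F)) := by
  have hdist : ∀ f g : C(ℝ, F), dist (ofContinuousMap f) (ofContinuousMap g)
      ≤ dist (f.restrict (Icc (0 : ℝ) 1)) (g.restrict (Icc (0 : ℝ) 1)) := fun f g => by
    rw [dist_eq_norm]
    refine norm_le_of_forall_mem_Icc dist_nonneg fun t ht => ?_
    calc ‖f t - g t‖ = dist (f t) (g t) := (dist_eq_norm _ _).symm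
      _ ≤ _ := ContinuousMap.dist_apply_le_dist (f := f.restrict (Icc (0 : ℝ) 1))
        (g := g.restrict (Icc (0 : ℝ) 1)) ⟨t, ht⟩
  refine continuous_iff_continuousAt.mpr fun f => tendsto_iff_dist_tendsto_zero.mpr ?_
  exact squeeze_zero (fun _ => dist_nonneg) (fun g => hdist g f)
    (tendsto_iff_dist_tendsto_zero.mp ((ContinuousMap.continuous_restrict _).tendsto f))

theorem isCompact_setOf_lipschitzWith [ProperSpace F] (L : ℝ≥0) (t₀ : ℝ) (a : F) :
    IsCompact {u : Velocity F | LipschitzWith L u ∧ u t₀ = a} := by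
  let S : Set C(ℝ, F) := {f | LipschitzWith L f ∧ f t₀ = a}
  have himage : ContinuousMap.toFun '' S = {f | LipschitzWith L f} ∩ {f | f t₀ = a} := by
    ext f
    constructor
    · rintro ⟨g, hg, rfl⟩
      exact hg
    · exact fun hf => ⟨⟨f, hf.1.continuous⟩, hf, rfl⟩
  have hsub : ContinuousMap.toFun '' S ⊆ univ.pi fun t => closedBall a (L * dist t t₀) := by
    rintro _ ⟨f, hf, rfl⟩ t -
    have hdist := hf.1.dist_le_mul t t₀
    rwa [hf.2] at hdist
  have hcompact : IsCompact (ContinuousMap.toFun '' S) := by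
    refine (isCompact_univ_pi fun t => isCompact_closedBall a _).of_isClosed_subset ?_ hsub
    rw [himage]
    exact (isClosed_setOfPred_lipschitzWith L).inter
      (isClosed_eq (continuous_apply t₀) continuous_const)
  have hS : IsCompact S := ArzelaAscoli.isCompact_of_equicontinuous S hcompact
    (LipschitzWith.uniformEquicontinuous _ L fun f => f.2.1).equicontinuous
  have himage' : ofContinuousMap '' S = {u : Velocity F | LipschitzWith L u ∧ u t₀ = a} :=
    image_id S
  exact himage' ▸ hS.image continuous_ofContinuousMap

end Space

end Velocity

/-- Paths in `F`, encoded by their starting point `x.1` and their velocity `x.2`, with the inner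
product of `F × L²(0,1)`. -/
def PathSpace (F : Type*) [NormedAddCommGroup F] : Type _ := F × Velocity F

namespace PathSpace

section Space

variable {F : Type*} [NormedAddCommGroup F]

/-- The path with starting point `a` and velocity `u`. -/
def mk (a : F) (u : Velocity F) : PathSpace F := (a, u)

@[simp] theorem fst_mk (a : F) (u : Velocity F) : (mk a u).1 = a := rfl

@[simp] theorem snd_mk (a : F) (u : Velocity F) : (mk a u).2 = u := rfl

instance : AddCommGroup (PathSpace F) := inferInstanceAs (AddCommGroup (F × Velocity F))

@[simp] theorem fst_add (x y : PathSpace F) : (x + y).1 = x.1 + y.1 := rfl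

@[simp] theorem snd_add (x y : PathSpace F) : (x + y).2 = x.2 + y.2 := rfl

@[simp] theorem fst_sub (x y : PathSpace F) : (x - y).1 = x.1 - y.1 := rfl

@[simp] theorem snd_sub (x y : PathSpace F) : (x - y).2 = x.2 - y.2 := rfl

variable [InnerProductSpace ℝ F]

instance : Module ℝ (PathSpace F) := inferInstanceAs (Module ℝ (F × Velocity F))

@[simp] theorem fst_smul (c : ℝ) (x : PathSpace F) : (c • x).1 = c • x.1 := rfl

@[simp] theorem snd_smul (c : ℝ) (x : PathSpace F) : (c • x).2 = c • x.2 := rfl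

/-- The inner product of `F × L²(0,1)`. -/
@[reducible]
noncomputable def innerCore : PreInnerProductSpace.Core ℝ (PathSpace F) where
  inner x y := ⟪x.1, y.1⟫ + ⟪x.2, y.2⟫
  conj_inner_symm x y := by simp only [conj_trivial, real_inner_comm]
  re_inner_nonneg x := add_nonneg real_inner_self_nonneg real_inner_self_nonneg
  add_left x y z := by
    simp only [fst_add, snd_add, inner_add_left]
    ring
  smul_left x y c := by
    simp only [fst_smul, snd_smul, real_inner_smul_left, conj_trivial]
    ring

noncomputable instance : SeminormedAddCommGroup (PathSpace F) :=
  @InnerProductSpace.Core.toSeminormedAddCommGroup ℝ _ _ _ _ innerCore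

noncomputable instance : InnerProductSpace ℝ (PathSpace F) := InnerProductSpace.ofCore innerCore

theorem inner_def (x y : PathSpace F) : ⟪x, y⟫ = ⟪x.1, y.1⟫ + ⟪x.2, y.2⟫ := rfl

theorem norm_sq_eq (x : PathSpace F) : ‖x‖ ^ 2 = ‖x.1‖ ^ 2 + ‖x.2‖ ^ 2 := by
  simp only [← real_inner_self_eq_norm_sq, inner_def]

theorem norm_fst_le (x : PathSpace F) : ‖x.1‖ ≤ ‖x‖ := by
  nlinarith [norm_sq_eq x, norm_nonneg x, norm_nonneg x.1, sq_nonneg ‖x.2‖]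

theorem norm_snd_le (x : PathSpace F) : ‖x.2‖ ≤ ‖x‖ := by
  nlinarith [norm_sq_eq x, norm_nonneg x, norm_nonneg x.2, sq_nonneg ‖x.1‖]

theorem norm_le_add (x : PathSpace F) : ‖x‖ ≤ ‖x.1‖ + ‖x.2‖ := by
  nlinarith [norm_sq_eq x, norm_nonneg x, norm_nonneg x.1, norm_nonneg x.2]

theorem lipschitzWith_fst : LipschitzWith 1 fun x : PathSpace F => x.1 :=
  .of_dist_le_mul fun x y => by simpa [dist_eq_norm] using norm_fst_le (x - y)

theorem lipschitzWith_snd : LipschitzWith 1 fun x : PathSpace F => x.2 :=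
  .of_dist_le_mul fun x y => by simpa [dist_eq_norm] using norm_snd_le (x - y)

@[fun_prop]
theorem continuous_fst : Continuous fun x : PathSpace F => x.1 := lipschitzWith_fst.continuous

@[fun_prop]
theorem continuous_snd : Continuous fun x : PathSpace F => x.2 := lipschitzWith_snd.continuous

@[fun_prop]
theorem continuous_mk {Z : Type*} [TopologicalSpace Z] {f : Z → F} {w : Z → Velocity F}
    (hf : Continuous f) (hw : Continuous w) : Continuous fun z => mk (f z) (w z) := by
  have hlip : LipschitzWith 2 fun p : F × Velocity F => mk p.1 p.2 :=
    .of_dist_le_mul fun p r => by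
      have hle := norm_le_add (mk p.1 p.2 - mk r.1 r.2)
      have hfst := _root_.norm_fst_le (p - r)
      have hsnd := _root_.norm_snd_le (p - r)
      simp only [fst_sub, snd_sub, fst_mk, snd_mk, Prod.fst_sub, Prod.snd_sub] at hle hfst hsnd
      rw [dist_eq_norm, dist_eq_norm, NNReal.coe_ofNat]
      linarith
  exact hlip.continuous.comp (hf.prodMk hw)

end Space

section Path

variable {F : Type*} [NormedAddCommGroup F] [InnerProductSpace ℝ F]

/-- The path encoded by a starting point and a velocity. -/
noncomputable def path (x : PathSpace F) (t : ℝ) : F := x.1 + ∫ s in (0 : ℝ)..t, x.2 s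

theorem path_zero (x : PathSpace F) : path x 0 = x.1 := by simp [path]

theorem path_add (x y : PathSpace F) (t : ℝ) : path (x + y) t = path x t + path y t := by
  simp only [path, fst_add, snd_add, Velocity.add_apply]
  rw [intervalIntegral.integral_add, add_add_add_comm] <;>
    exact Continuous.intervalIntegrable (by fun_prop) _ _

theorem path_sub (x y : PathSpace F) (t : ℝ) : path (x - y) t = path x t - path y t := by
  rw [eq_sub_iff_add_eq, ← path_add, sub_add_cancel]

theorem norm_path_sub_fst_le (x : PathSpace F) {t : ℝ} (ht : t ∈ Icc (0 : ℝ) 1) :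
    ‖path x t - x.1‖ ≤ ‖x.2‖ := by
  rw [path, add_sub_cancel_left]
  exact x.2.norm_integral_le ht

theorem norm_path_le (x : PathSpace F) {t : ℝ} (ht : t ∈ Icc (0 : ℝ) 1) :
    ‖path x t‖ ≤ 2 * ‖x‖ := by
  calc ‖path x t‖ ≤ ‖x.1‖ + ‖path x t - x.1‖ := norm_le_norm_add_norm_sub' _ _
    _ ≤ ‖x‖ + ‖x‖ := by
        gcongr
        exacts [norm_fst_le x, (norm_path_sub_fst_le x ht).trans (norm_snd_le x)]
    _ = 2 * ‖x‖ := by ring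

variable [CompleteSpace F]

theorem hasDerivAt_path (x : PathSpace F) (t : ℝ) : HasDerivAt (path x) (x.2 t) t :=
  ((map_continuous x.2).integral_hasStrictDerivAt 0 t).hasDerivAt.const_add x.1

@[fun_prop]
theorem continuous_path (x : PathSpace F) : Continuous (path x) :=
  continuous_iff_continuousAt.mpr fun t => (hasDerivAt_path x t).continuousAt

end Path

end PathSpace

/-! ### Potentials -/

section Gradient

variable {F : Type*} [NormedAddCommGroup F] [InnerProductSpace ℝ F] [CompleteSpace F]

theorem contDiff_gradient {v : F → ℝ} (hv : ContDiff ℝ 2 v) : ContDiff ℝ 1 (∇ v) :=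
  (InnerProductSpace.toDual ℝ F).symm.contDiff.comp (hv.fderiv_right le_rfl)

theorem add_inner_gradient_sub_le {v : F → ℝ} {C : ℝ} (hv : Differentiable ℝ v) (hC : 0 ≤ C)
    (hlip : ∀ x y, ‖∇ v x - ∇ v y‖ ≤ C * ‖x - y‖) (x y : F) :
    v x + ⟪∇ v x, y⟫ - C * ‖y‖ ^ 2 ≤ v (x + y) := by
  have hle := (convex_closedBall x ‖y‖).norm_image_sub_le_of_norm_hasFDerivWithin_le
    (f := fun z => v z - innerSL ℝ (∇ v x) z) (C := C * ‖y‖) (x := x) (y := x + y)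
    (fun z _ => ((hv z).hasGradientAt.hasFDerivAt.sub
      (innerSL ℝ (∇ v x)).hasFDerivAt).hasFDerivWithinAt)
    (fun z hz => by
      rw [mem_closedBall, dist_eq_norm] at hz
      calc ‖innerSL ℝ (∇ v z) - innerSL ℝ (∇ v x)‖ = ‖∇ v z - ∇ v x‖ := by
            rw [← map_sub, innerSL_apply_norm]
        _ ≤ C * ‖y‖ := (hlip z x).trans (by gcongr))
    (by simp) (by simp [dist_eq_norm])
  simp only [innerSL_apply_apply, inner_add_right, add_sub_cancel_left] at hle
  nlinarith [(abs_le.mp hle).1]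

end Gradient

/-- A `C²` potential that is bounded by `C` together with its first two derivatives. -/
structure IsTamePotential {F : Type*} [NormedAddCommGroup F] [InnerProductSpace ℝ F]
    [CompleteSpace F] (v : F → ℝ) (C : ℝ) : Prop where
  contDiff : ContDiff ℝ 2 v
  abs_le : ∀ x, |v x| ≤ C
  norm_gradient_le : ∀ x, ‖∇ v x‖ ≤ C
  norm_fderiv_gradient_le : ∀ x, ‖fderiv ℝ (∇ v) x‖ ≤ C

namespace IsTamePotential

variable {F : Type*} [NormedAddCommGroup F] [InnerProductSpace ℝ F] [CompleteSpace F]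
  {v : F → ℝ} {C : ℝ}

theorem nonneg (hv : IsTamePotential v C) : 0 ≤ C := (abs_nonneg _).trans (hv.abs_le 0)

theorem differentiable (hv : IsTamePotential v C) : Differentiable ℝ v :=
  hv.contDiff.differentiable two_ne_zero

theorem differentiable_gradient (hv : IsTamePotential v C) : Differentiable ℝ (∇ v) :=
  (contDiff_gradient hv.contDiff).differentiable one_ne_zero

theorem continuous_gradient (hv : IsTamePotential v C) : Continuous (∇ v) :=
  hv.differentiable_gradient.continuous

theorem continuous_fderiv_gradient (hv : IsTamePotential v C) : Continuous (fderiv ℝ (∇ v)) :=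
  (contDiff_gradient hv.contDiff).continuous_fderiv one_ne_zero

theorem abs_sub_le (hv : IsTamePotential v C) (x y : F) : |v x - v y| ≤ C * ‖x - y‖ := by
  refine convex_univ.norm_image_sub_le_of_norm_fderiv_le (𝕜 := ℝ) (fun z _ => hv.differentiable z)
    (fun z _ => ?_) (mem_univ y) (mem_univ x)
  rw [← toDual_gradient, LinearIsometryEquiv.norm_map]
  exact hv.norm_gradient_le z

theorem norm_gradient_sub_le (hv : IsTamePotential v C) (x y : F) :
    ‖∇ v x - ∇ v y‖ ≤ C * ‖x - y‖ :=
  convex_univ.norm_image_sub_le_of_norm_fderiv_le (𝕜 := ℝ)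
    (fun z _ => hv.differentiable_gradient z) (fun z _ => hv.norm_fderiv_gradient_le z)
    (mem_univ y) (mem_univ x)

end IsTamePotential

/-! ### The Maupertuis functional -/

namespace PathSpace

variable {F : Type*} [NormedAddCommGroup F] [InnerProductSpace ℝ F]

/-- The mean over the path of the kinetic energy `-v` that a particle of energy zero in the
potential `v` has there. -/
noncomputable def meanKinetic (v : F → ℝ) (x : PathSpace F) : ℝ :=
  -∫ t in (0 : ℝ)..1, v (path x t)

/-- The Maupertuis functional at energy zero. Its critical points of positive value are, up to a
linear change of time, the brake orbits of energy zero in the potential `v`. -/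
noncomputable def maupertuis (v : F → ℝ) (x : PathSpace F) : ℝ := ‖x.2‖ ^ 2 / 2 * meanKinetic v x

end PathSpace

namespace IsTamePotential

open PathSpace

variable {F : Type*} [NormedAddCommGroup F] [InnerProductSpace ℝ F] [CompleteSpace F]
  {v : F → ℝ} {C : ℝ}

/-- The gradient of the potential along a path. -/
noncomputable def gradientAlong (hv : IsTamePotential v C) (x : PathSpace F) : Velocity F :=
  .ofContinuousMap ⟨fun t => ∇ v (path x t), hv.continuous_gradient.comp (continuous_path x)⟩

@[simp] theorem gradientAlong_apply (hv : IsTamePotential v C) (x : PathSpace F) (t : ℝ) :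
    hv.gradientAlong x t = ∇ v (path x t) := rfl

theorem hasDerivAt_integral_gradientAlong (hv : IsTamePotential v C) (x : PathSpace F) (t : ℝ) :
    HasDerivAt (fun t => ∫ s in t..1, hv.gradientAlong x s) (-∇ v (path x t)) t :=
  have hcont := map_continuous (hv.gradientAlong x)
  intervalIntegral.integral_hasDerivAt_left (hcont.intervalIntegrable _ _)
    hcont.aestronglyMeasurable.stronglyMeasurableAtFilter hcont.continuousAt

/-- The integral of the gradient of the potential over the part of the path after time `t`. -/
noncomputable def impulse (hv : IsTamePotential v C) (x : PathSpace F) : Velocity F :=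
  .ofContinuousMap ⟨fun t => ∫ s in t..1, hv.gradientAlong x s,
    continuous_iff_continuousAt.mpr fun t =>
      (hv.hasDerivAt_integral_gradientAlong x t).continuousAt⟩

theorem impulse_apply (hv : IsTamePotential v C) (x : PathSpace F) (t : ℝ) :
    hv.impulse x t = ∫ s in t..1, hv.gradientAlong x s := rfl

theorem hasDerivAt_impulse (hv : IsTamePotential v C) (x : PathSpace F) (t : ℝ) :
    HasDerivAt (hv.impulse x) (-∇ v (path x t)) t :=
  hv.hasDerivAt_integral_gradientAlong x t

theorem impulse_one (hv : IsTamePotential v C) (x : PathSpace F) : hv.impulse x 1 = 0 :=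
  intervalIntegral.integral_same

theorem norm_impulse_sub_le (hv : IsTamePotential v C) (x y : PathSpace F) {t : ℝ}
    (ht : t ∈ Icc (0 : ℝ) 1) : ‖hv.impulse x t - hv.impulse y t‖ ≤ 2 * C * ‖x - y‖ := by
  have hC := hv.nonneg
  rw [impulse_apply, impulse_apply, ← intervalIntegral.integral_sub
    (Continuous.intervalIntegrable (by fun_prop) _ _)
    (Continuous.intervalIntegrable (by fun_prop) _ _)]
  calc ‖∫ s in t..1, (hv.gradientAlong x s - hv.gradientAlong y s)‖
      ≤ 2 * C * ‖x - y‖ * |1 - t| := by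
        refine intervalIntegral.norm_integral_le_of_norm_le_const fun s hs => ?_
        rw [uIoc_of_le ht.2] at hs
        calc ‖∇ v (path x s) - ∇ v (path y s)‖ ≤ C * ‖path (x - y) s‖ := by
              rw [path_sub]
              exact hv.norm_gradient_sub_le _ _
          _ ≤ C * (2 * ‖x - y‖) := by
              gcongr
              exact norm_path_le _ ⟨ht.1.trans hs.1.le, hs.2⟩
          _ = 2 * C * ‖x - y‖ := by ring
    _ ≤ 2 * C * ‖x - y‖ := by
        refine mul_le_of_le_one_right (by positivity) ?_
        rw [abs_of_nonneg (sub_nonneg.mpr ht.2)]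
        linarith [ht.1]

@[fun_prop]
theorem continuous_impulse (hv : IsTamePotential v C) : Continuous hv.impulse := by
  have hC := hv.nonneg
  refine (LipschitzWith.of_dist_le_mul (K := (2 * C).toNNReal) fun x y => ?_).continuous
  rw [Real.coe_toNNReal _ (by positivity), dist_eq_norm, dist_eq_norm]
  exact Velocity.norm_le_of_forall_mem_Icc (by positivity) fun t ht => hv.norm_impulse_sub_le x y ht

@[fun_prop]
theorem continuous_impulse_zero (hv : IsTamePotential v C) :
    Continuous fun x => hv.impulse x 0 := by
  have hC := hv.nonneg
  refine (LipschitzWith.of_dist_le_mul (K := (2 * C).toNNReal) fun x y => ?_).continuous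
  rw [Real.coe_toNNReal _ (by positivity), dist_eq_norm, dist_eq_norm]
  exact hv.norm_impulse_sub_le x y (left_mem_Icc.mpr zero_le_one)

/-- The gradient of `x ↦ ∫ t in 0..1, v (path x t)`. -/
noncomputable def potentialGradient (hv : IsTamePotential v C) (x : PathSpace F) : PathSpace F :=
  PathSpace.mk (hv.impulse x 0) (hv.impulse x)

@[fun_prop]
theorem continuous_potentialGradient (hv : IsTamePotential v C) :
    Continuous hv.potentialGradient := by
  unfold potentialGradient
  fun_prop

theorem inner_potentialGradient (hv : IsTamePotential v C) (x y : PathSpace F) :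
    ⟪hv.potentialGradient x, y⟫ = ∫ t in (0 : ℝ)..1, ⟪∇ v (path x t), path y t⟫ := by
  have hgrad := hv.continuous_gradient
  have hderiv : ∀ t ∈ uIcc (0 : ℝ) 1, HasDerivAt (fun t => ⟪hv.impulse x t, path y t⟫)
      (⟪hv.impulse x t, y.2 t⟫ + ⟪-∇ v (path x t), path y t⟫) t := fun t _ =>
    (hv.hasDerivAt_impulse x t).inner ℝ (hasDerivAt_path y t)
  have hparts := intervalIntegral.integral_eq_sub_of_hasDerivAt hderiv
    (Continuous.intervalIntegrable (by fun_prop) _ _)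
  rw [intervalIntegral.integral_add (Continuous.intervalIntegrable (by fun_prop) _ _)
    (Continuous.intervalIntegrable (by fun_prop) _ _)] at hparts
  simp only [inner_neg_left, intervalIntegral.integral_neg, impulse_one, inner_zero_left,
    path_zero] at hparts
  rw [potentialGradient, PathSpace.inner_def, Velocity.inner_def, fst_mk, snd_mk]
  linarith

theorem abs_inner_potentialGradient_le (hv : IsTamePotential v C) (x y : PathSpace F) :
    |⟪hv.potentialGradient x, y⟫| ≤ 2 * C * ‖y‖ := by
  have hle : ‖∫ t in (0 : ℝ)..1, ⟪∇ v (path x t), path y t⟫‖ ≤ 2 * C * ‖y‖ * |1 - 0| := by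
    refine intervalIntegral.norm_integral_le_of_norm_le_const fun t ht => ?_
    rw [uIoc_of_le zero_le_one] at ht
    calc ‖⟪∇ v (path x t), path y t⟫‖ ≤ ‖∇ v (path x t)‖ * ‖path y t‖ := norm_inner_le_norm _ _
      _ ≤ C * (2 * ‖y‖) :=
        mul_le_mul (hv.norm_gradient_le _) (norm_path_le _ (Ioc_subset_Icc_self ht))
          (norm_nonneg _) hv.nonneg
      _ = 2 * C * ‖y‖ := by ring
  simpa [inner_potentialGradient] using hle

theorem abs_meanKinetic_le (hv : IsTamePotential v C) (x : PathSpace F) :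
    |meanKinetic v x| ≤ C := by
  have hle : ‖∫ t in (0 : ℝ)..1, v (path x t)‖ ≤ C * |1 - 0| :=
    intervalIntegral.norm_integral_le_of_norm_le_const fun t _ => hv.abs_le _
  simpa [meanKinetic] using hle

theorem abs_meanKinetic_sub_le (hv : IsTamePotential v C) (x y : PathSpace F) :
    |meanKinetic v x - meanKinetic v y| ≤ 2 * C * ‖x - y‖ := by
  have hcont := hv.differentiable.continuous
  have hC := hv.nonneg
  have hle : ‖∫ t in (0 : ℝ)..1, (v (path x t) - v (path y t))‖ ≤ 2 * C * ‖x - y‖ * |1 - 0| := by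
    refine intervalIntegral.norm_integral_le_of_norm_le_const fun t ht => ?_
    rw [uIoc_of_le zero_le_one] at ht
    calc |v (path x t) - v (path y t)| ≤ C * ‖path (x - y) t‖ := by
          rw [path_sub]
          exact hv.abs_sub_le _ _
      _ ≤ C * (2 * ‖x - y‖) := by
          gcongr
          exact norm_path_le _ (Ioc_subset_Icc_self ht)
      _ = 2 * C * ‖x - y‖ := by ring
  rw [intervalIntegral.integral_sub (Continuous.intervalIntegrable (by fun_prop) _ _)
    (Continuous.intervalIntegrable (by fun_prop) _ _)] at hle
  rw [meanKinetic, meanKinetic, neg_sub_neg, abs_sub_comm]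
  simpa using hle

@[fun_prop]
theorem continuous_meanKinetic (hv : IsTamePotential v C) : Continuous (meanKinetic v) := by
  have hC := hv.nonneg
  refine (LipschitzWith.of_dist_le_mul (K := (2 * C).toNNReal) fun x y => ?_).continuous
  rw [Real.coe_toNNReal _ (by positivity), Real.dist_eq, dist_eq_norm]
  exact hv.abs_meanKinetic_sub_le x y

theorem meanKinetic_add_le (hv : IsTamePotential v C) (x y : PathSpace F) :
    meanKinetic v (x + y)
      ≤ meanKinetic v x - ⟪hv.potentialGradient x, y⟫ + 4 * C * ‖y‖ ^ 2 := by
  have hcont := hv.differentiable.continuous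
  have hgrad := hv.continuous_gradient
  have hC := hv.nonneg
  have hle : ∫ t in (0 : ℝ)..1, (v (path x t) + ⟪∇ v (path x t), path y t⟫ - 4 * C * ‖y‖ ^ 2)
      ≤ ∫ t in (0 : ℝ)..1, v (path (x + y) t) := by
    refine intervalIntegral.integral_mono_on zero_le_one
      (Continuous.intervalIntegrable (by fun_prop) _ _)
      (Continuous.intervalIntegrable (by fun_prop) _ _) fun t ht => ?_
    calc v (path x t) + ⟪∇ v (path x t), path y t⟫ - 4 * C * ‖y‖ ^ 2
        = v (path x t) + ⟪∇ v (path x t), path y t⟫ - C * (2 * ‖y‖) ^ 2 := by ring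
      _ ≤ v (path x t) + ⟪∇ v (path x t), path y t⟫ - C * ‖path y t‖ ^ 2 := by
          gcongr
          exact norm_path_le y ht
      _ ≤ v (path (x + y) t) := by
          rw [path_add]
          exact add_inner_gradient_sub_le hv.differentiable hC hv.norm_gradient_sub_le _ _
  rw [intervalIntegral.integral_sub (Continuous.intervalIntegrable (by fun_prop) _ _)
      intervalIntegrable_const,
    intervalIntegral.integral_add (Continuous.intervalIntegrable (by fun_prop) _ _)
      (Continuous.intervalIntegrable (by fun_prop) _ _),
    intervalIntegral.integral_const, ← hv.inner_potentialGradient] at hle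
  simp only [sub_zero, one_smul] at hle
  rw [meanKinetic, meanKinetic]
  linarith

/-- The gradient of the Maupertuis functional. -/
noncomputable def maupertuisGradient (hv : IsTamePotential v C) (x : PathSpace F) : PathSpace F :=
  meanKinetic v x • PathSpace.mk 0 x.2 - (‖x.2‖ ^ 2 / 2) • hv.potentialGradient x

theorem inner_maupertuisGradient (hv : IsTamePotential v C) (x y : PathSpace F) :
    ⟪hv.maupertuisGradient x, y⟫
      = meanKinetic v x * ⟪x.2, y.2⟫ - ‖x.2‖ ^ 2 / 2 * ⟪hv.potentialGradient x, y⟫ := by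
  rw [maupertuisGradient, inner_sub_left, real_inner_smul_left, real_inner_smul_left,
    PathSpace.inner_def, fst_mk, snd_mk, inner_zero_left, zero_add]

theorem maupertuis_add_le (hv : IsTamePotential v C) {S : ℝ} {x y : PathSpace F}
    (hx : ‖x.2‖ ≤ S) (hy : ‖y‖ ≤ ‖x.2‖) :
    maupertuis v (x + y) ≤ maupertuis v x + ⟪hv.maupertuisGradient x, y⟫
      + C * (1 / 2 + 3 * S + 8 * S ^ 2) * ‖y‖ ^ 2 := by
  have hC := hv.nonneg
  have hS : 0 ≤ S := (norm_nonneg _).trans hx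
  have hyx := PathSpace.norm_snd_le y
  set l := ⟪hv.potentialGradient x, y⟫
  set p := ⟪x.2, y.2⟫
  have hl : |l| ≤ 2 * C * ‖y‖ := hv.abs_inner_potentialGradient_le x y
  have hp : |p| ≤ S * ‖y‖ := (abs_real_inner_le_norm _ _).trans (by gcongr)
  have hpl : -(p * l) ≤ S * ‖y‖ * (2 * C * ‖y‖) := by
    calc -(p * l) ≤ |p| * |l| := by rw [← abs_mul]; exact neg_le_abs _
      _ ≤ _ := by gcongr
  have hB : meanKinetic v x - l ≤ C + 2 * C * S := by
    have : 2 * C * ‖y‖ ≤ 2 * C * S := by gcongr; exact hy.trans hx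
    linarith [neg_le_of_abs_le hl, le_of_abs_le (hv.abs_meanKinetic_le x)]
  have hy2 : ‖y.2‖ ^ 2 / 2 * (meanKinetic v x - l) ≤ ‖y‖ ^ 2 / 2 * (C + 2 * C * S) :=
    (mul_le_mul_of_nonneg_left hB (by positivity)).trans (by gcongr)
  have hkin : ‖(x + y).2‖ ^ 2 / 2 = ‖x.2‖ ^ 2 / 2 + p + ‖y.2‖ ^ 2 / 2 := by
    rw [snd_add, norm_add_sq_real]
    ring
  have hkin_le : ‖(x + y).2‖ ^ 2 / 2 ≤ 2 * S ^ 2 := by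
    nlinarith [le_of_abs_le hp, norm_nonneg y, norm_nonneg y.2, norm_nonneg x.2]
  calc maupertuis v (x + y)
      ≤ ‖(x + y).2‖ ^ 2 / 2 * (meanKinetic v x - l + 4 * C * ‖y‖ ^ 2) := by
        unfold maupertuis
        gcongr
        exact hv.meanKinetic_add_le x y
    _ = maupertuis v x + ⟪hv.maupertuisGradient x, y⟫ + (‖y.2‖ ^ 2 / 2 * (meanKinetic v x - l)
          + -(p * l) + 4 * C * ‖y‖ ^ 2 * (‖(x + y).2‖ ^ 2 / 2)) := by
        rw [inner_maupertuisGradient, hkin, maupertuis]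
        ring
    _ ≤ maupertuis v x + ⟪hv.maupertuisGradient x, y⟫ + (‖y‖ ^ 2 / 2 * (C + 2 * C * S)
          + S * ‖y‖ * (2 * C * ‖y‖) + 4 * C * ‖y‖ ^ 2 * (2 * S ^ 2)) := by gcongr
    _ = _ := by ring

theorem isDescentField (hv : IsTamePotential v C) :
    IsDescentField (maupertuis v) hv.maupertuisGradient fun x => ‖x.2‖ where
  continuous_functional := by
    unfold maupertuis
    fun_prop
  continuous_gradient := by
    unfold maupertuisGradient
    fun_prop
  lipschitzWith_scale := by
    simpa [Function.comp_def] using lipschitzWith_one_norm.comp (lipschitzWith_snd (F := F))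
  scale_nonneg x := norm_nonneg _
  exists_le_add_inner_add S := ⟨_, fun _ _ hx hy => hv.maupertuis_add_le hx hy⟩

end IsTamePotential

/-! ### Almost critical paths -/

theorem abs_le_add_of_abs_sub_le_of_abs_integral_le {f : ℝ → ℝ} (hf : Continuous f) {D M : ℝ}
    (hosc : ∀ s ∈ Icc (0 : ℝ) 1, ∀ t ∈ Icc (0 : ℝ) 1, |f t - f s| ≤ D)
    (hmean : |∫ s in (0 : ℝ)..1, f s| ≤ M) {t : ℝ} (ht : t ∈ Icc (0 : ℝ) 1) : |f t| ≤ D + M := by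
  have hdist : ‖∫ s in (0 : ℝ)..1, (f t - f s)‖ ≤ D * |1 - 0| := by
    refine intervalIntegral.norm_integral_le_of_norm_le_const fun s hs => ?_
    rw [uIoc_of_le zero_le_one] at hs
    exact hosc s (Ioc_subset_Icc_self hs) t ht
  rw [intervalIntegral.integral_sub intervalIntegrable_const (hf.intervalIntegrable _ _)] at hdist
  simp only [intervalIntegral.integral_const, sub_zero, one_smul, abs_one, mul_one,
    Real.norm_eq_abs] at hdist
  calc |f t| = |(f t - ∫ s in (0 : ℝ)..1, f s) + ∫ s in (0 : ℝ)..1, f s| := by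
        rw [sub_add_cancel]
    _ ≤ D + M := (abs_add_le _ _).trans (add_le_add hdist hmean)

namespace IsTamePotential

open PathSpace

variable {F : Type*} [NormedAddCommGroup F] [InnerProductSpace ℝ F] [CompleteSpace F]
  {v : F → ℝ} {C : ℝ}

theorem hasDerivAt_inner_impulse_gradient (hv : IsTamePotential v C) (x : PathSpace F) (t : ℝ) :
    HasDerivAt (fun t => ⟪hv.impulse x t, ∇ v (path x t)⟫)
      (⟪hv.impulse x t, fderiv ℝ (∇ v) (path x t) (x.2 t)⟫ - ‖∇ v (path x t)‖ ^ 2) t := by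
  refine ((hv.hasDerivAt_impulse x t).inner ℝ ((hv.differentiable_gradient _).hasFDerivAt
    |>.comp_hasDerivAt t (hasDerivAt_path x t))).congr_deriv ?_
  rw [Function.comp_apply, inner_neg_left, real_inner_self_eq_norm_sq, sub_eq_add_neg]

theorem inner_impulse_fderiv_gradient_le (hv : IsTamePotential v C) (x : PathSpace F) (t : ℝ) :
    ⟪hv.impulse x t, fderiv ℝ (∇ v) (path x t) (x.2 t)⟫ ≤ C * (‖hv.impulse x t‖ * ‖x.2 t‖) :=
  calc ⟪hv.impulse x t, fderiv ℝ (∇ v) (path x t) (x.2 t)⟫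
      ≤ ‖hv.impulse x t‖ * (C * ‖x.2 t‖) := (real_inner_le_norm _ _).trans <| by
        gcongr
        exact ContinuousLinearMap.le_of_opNorm_le _ (hv.norm_fderiv_gradient_le _) _
    _ = C * (‖hv.impulse x t‖ * ‖x.2 t‖) := by ring

theorem norm_gradientAlong_sq_le (hv : IsTamePotential v C) (x : PathSpace F) :
    ‖hv.gradientAlong x‖ ^ 2 ≤ C * ‖hv.impulse x 0‖ + C * (‖hv.impulse x‖ * ‖x.2‖) := by
  have hgrad := hv.continuous_gradient
  have hhess := hv.continuous_fderiv_gradient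
  have hparts := intervalIntegral.integral_eq_sub_of_hasDerivAt
    (fun t _ => hv.hasDerivAt_inner_impulse_gradient x t)
    (Continuous.intervalIntegrable (by fun_prop) 0 1)
  rw [intervalIntegral.integral_sub (Continuous.intervalIntegrable (by fun_prop) _ _)
    (Continuous.intervalIntegrable (by fun_prop) _ _), impulse_one, inner_zero_left, path_zero]
    at hparts
  have hzero : ⟪hv.impulse x 0, ∇ v x.1⟫ ≤ C * ‖hv.impulse x 0‖ := by
    rw [mul_comm]
    exact (real_inner_le_norm _ _).trans (by gcongr; exact hv.norm_gradient_le _)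
  have hint : ∫ t in (0 : ℝ)..1, ⟪hv.impulse x t, fderiv ℝ (∇ v) (path x t) (x.2 t)⟫
      ≤ C * (‖hv.impulse x‖ * ‖x.2‖) :=
    calc _ ≤ ∫ t in (0 : ℝ)..1, C * (‖hv.impulse x t‖ * ‖x.2 t‖) :=
          intervalIntegral.integral_mono_on zero_le_one
            (Continuous.intervalIntegrable (by fun_prop) _ _)
            (Continuous.intervalIntegrable (by fun_prop) _ _) fun t _ =>
            hv.inner_impulse_fderiv_gradient_le x t
      _ ≤ C * (‖hv.impulse x‖ * ‖x.2‖) := by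
          rw [intervalIntegral.integral_const_mul]
          exact mul_le_mul_of_nonneg_left (Velocity.integral_norm_mul_norm_le _ _) hv.nonneg
  rw [Velocity.norm_sq_eq_integral]
  simp only [gradientAlong_apply]
  linarith

/-- The energy along a path, divided by `lam`, if its velocity is replaced by
`lam • hv.impulse x`. -/
noncomputable def energy (hv : IsTamePotential v C) (lam : ℝ) (x : PathSpace F) (t : ℝ) : ℝ :=
  lam / 2 * ‖hv.impulse x t‖ ^ 2 + v (path x t)

theorem hasDerivAt_energy (hv : IsTamePotential v C) (lam : ℝ) (x : PathSpace F) (t : ℝ) :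
    HasDerivAt (hv.energy lam x) ⟪hv.gradientAlong x t, (x.2 - lam • hv.impulse x) t⟫ t := by
  refine (((hv.hasDerivAt_impulse x t).norm_sq.const_mul (lam / 2)).add
    ((hv.differentiable _).hasGradientAt.hasFDerivAt.comp_hasDerivAt t
      (hasDerivAt_path x t))).congr_deriv ?_
  simp only [gradientAlong_apply, Velocity.sub_apply, Velocity.smul_apply, inner_sub_right,
    inner_smul_right, inner_neg_right, InnerProductSpace.toDual_apply_apply, real_inner_comm]
  ring

theorem continuous_energy (hv : IsTamePotential v C) (lam : ℝ) (x : PathSpace F) :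
    Continuous (hv.energy lam x) :=
  continuous_iff_continuousAt.mpr fun t => (hv.hasDerivAt_energy lam x t).continuousAt

theorem abs_energy_sub_le (hv : IsTamePotential v C) (lam : ℝ) (x : PathSpace F) {s t : ℝ}
    (hs : s ∈ Icc (0 : ℝ) 1) (ht : t ∈ Icc (0 : ℝ) 1) :
    |hv.energy lam x t - hv.energy lam x s|
      ≤ ‖hv.gradientAlong x‖ * ‖x.2 - lam • hv.impulse x‖ := by
  wlog hst : s ≤ t generalizing s t
  · rw [abs_sub_comm]
    exact this ht hs (le_of_not_ge hst)
  rw [← intervalIntegral.integral_eq_sub_of_hasDerivAt (fun r _ => hv.hasDerivAt_energy lam x r)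
    (Continuous.intervalIntegrable (by fun_prop) _ _)]
  calc |∫ r in s..t, ⟪hv.gradientAlong x r, (x.2 - lam • hv.impulse x) r⟫|
      ≤ ∫ r in s..t, |⟪hv.gradientAlong x r, (x.2 - lam • hv.impulse x) r⟫| :=
        intervalIntegral.abs_integral_le_integral_abs hst
    _ ≤ ∫ r in (0 : ℝ)..1, |⟪hv.gradientAlong x r, (x.2 - lam • hv.impulse x) r⟫| :=
        intervalIntegral.integral_mono_interval hs.1 hst ht.2 (.of_forall fun _ => abs_nonneg _)
          (Continuous.intervalIntegrable (by fun_prop) _ _)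
    _ ≤ ∫ r in (0 : ℝ)..1, ‖hv.gradientAlong x r‖ * ‖(x.2 - lam • hv.impulse x) r‖ :=
        intervalIntegral.integral_mono_on zero_le_one
          (Continuous.intervalIntegrable (by fun_prop) _ _)
          (Continuous.intervalIntegrable (by fun_prop) _ _) fun _ _ => abs_real_inner_le_norm _ _
    _ ≤ _ := Velocity.integral_norm_mul_norm_le _ _

theorem integral_energy (hv : IsTamePotential v C) (lam : ℝ) (x : PathSpace F) :
    ∫ t in (0 : ℝ)..1, hv.energy lam x t = lam / 2 * ‖hv.impulse x‖ ^ 2 - meanKinetic v x := by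
  have hcont := hv.differentiable.continuous
  unfold energy
  rw [intervalIntegral.integral_add (Continuous.intervalIntegrable (by fun_prop) _ _)
    (Continuous.intervalIntegrable (by fun_prop) _ _), intervalIntegral.integral_const_mul,
    ← Velocity.norm_sq_eq_integral, meanKinetic, sub_neg_eq_add]

-- If `|v| ≤ κ` then `c ≤ ‖∇ v‖`, so in any case `κ - 2 * κ / c ^ 2 * ‖∇ v‖ ^ 2 ≤ -v`.
theorem le_mul_meanKinetic (hv : IsTamePotential v C) {κ c D : ℝ} {x : PathSpace F} (hκ : 0 < κ)
    (hc : 0 < c) (hreg : ∀ z, |v z| ≤ κ → c ≤ ‖∇ v z‖)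
    (hpath : ∀ t ∈ Icc (0 : ℝ) 1, v (path x t) ≤ κ)
    (hgrad : ‖hv.gradientAlong x‖ ^ 2 ≤ D * meanKinetic v x) :
    κ ≤ (1 + 2 * κ / c ^ 2 * D) * meanKinetic v x := by
  have hcont := hv.differentiable.continuous
  have hpoint : ∀ t ∈ Icc (0 : ℝ) 1,
      κ - 2 * κ / c ^ 2 * ‖hv.gradientAlong x t‖ ^ 2 ≤ -v (path x t) := by
    intro t ht
    rw [gradientAlong_apply]
    rcases lt_or_ge (v (path x t)) (-κ) with hlow | hlow
    · have : 0 ≤ 2 * κ / c ^ 2 * ‖∇ v (path x t)‖ ^ 2 := by positivity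
      linarith
    · have hc_le := hreg _ (_root_.abs_le.mpr ⟨hlow, hpath t ht⟩)
      have : 2 * κ ≤ 2 * κ / c ^ 2 * ‖∇ v (path x t)‖ ^ 2 := by
        calc 2 * κ = 2 * κ / c ^ 2 * c ^ 2 := by field_simp
          _ ≤ _ := by gcongr
      linarith [hpath t ht]
  have hint := intervalIntegral.integral_mono_on (μ := volume) zero_le_one
    (Continuous.intervalIntegrable (by fun_prop) _ _)
    (Continuous.intervalIntegrable (by fun_prop) _ _) hpoint
  rw [intervalIntegral.integral_sub intervalIntegrable_const
    (Continuous.intervalIntegrable (by fun_prop) _ _), intervalIntegral.integral_const_mul,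
    ← Velocity.norm_sq_eq_integral, intervalIntegral.integral_neg, ← meanKinetic,
    intervalIntegral.integral_const, sub_zero, one_smul] at hint
  have : 2 * κ / c ^ 2 * ‖hv.gradientAlong x‖ ^ 2
      ≤ 2 * κ / c ^ 2 * (D * meanKinetic v x) := by gcongr
  linarith

/-- The Maupertuis gradient of `x`, divided by `meanKinetic v x`, when `lam` is the ratio of
`‖x.2‖ ^ 2 / 2` to `meanKinetic v x`. -/
noncomputable def residual (hv : IsTamePotential v C) (lam : ℝ) (x : PathSpace F) : PathSpace F :=
  PathSpace.mk 0 x.2 - lam • hv.potentialGradient x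

/-- The path `x` satisfies the equation of brake orbits with multiplier `lam` up to a relative error
`ε` in `PathSpace F`. -/
structure IsApproxCritical (hv : IsTamePotential v C) (ε lam : ℝ) (x : PathSpace F) : Prop where
  multiplier_nonneg : 0 ≤ lam
  multiplier_mul_meanKinetic : lam * meanKinetic v x = ‖x.2‖ ^ 2 / 2
  norm_residual_le : ‖hv.residual lam x‖ ≤ ε * ‖x.2‖

theorem isApproxCritical_of_norm_mul_norm_maupertuisGradient_le (hv : IsTamePotential v C)
    {x : PathSpace F} {b η : ℝ} (hb : 0 < b) (hx : b ≤ maupertuis v x)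
    (hη : ‖x.2‖ * ‖hv.maupertuisGradient x‖ ≤ η) :
    hv.IsApproxCritical (η / (2 * b)) (‖x.2‖ ^ 2 / 2 / meanKinetic v x) x := by
  have hpos : 0 < ‖x.2‖ ^ 2 / 2 * meanKinetic v x := hb.trans_le hx
  have hB : 0 < meanKinetic v x := pos_of_mul_pos_right hpos (by positivity)
  have hu : 0 < ‖x.2‖ := (norm_nonneg _).lt_of_ne' fun hzero => by simp [hzero] at hpos
  have hη_nonneg : 0 ≤ η := le_trans (by positivity) hη
  refine ⟨by positivity, div_mul_cancel₀ _ hB.ne', ?_⟩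
  have hgrad : hv.maupertuisGradient x
      = meanKinetic v x • hv.residual (‖x.2‖ ^ 2 / 2 / meanKinetic v x) x := by
    rw [residual, smul_sub, smul_smul, mul_div_cancel₀ _ hB.ne', maupertuisGradient]
  rw [hgrad, norm_smul, Real.norm_of_nonneg hB.le] at hη
  rw [div_mul_eq_mul_div, le_div_iff₀ (by positivity)]
  calc ‖hv.residual (‖x.2‖ ^ 2 / 2 / meanKinetic v x) x‖ * (2 * b)
      ≤ ‖hv.residual (‖x.2‖ ^ 2 / 2 / meanKinetic v x) x‖
          * (2 * (‖x.2‖ ^ 2 / 2 * meanKinetic v x)) := by gcongr; exact hx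
    _ = ‖x.2‖ * (meanKinetic v x * ‖hv.residual (‖x.2‖ ^ 2 / 2 / meanKinetic v x) x‖)
          * ‖x.2‖ := by ring
    _ ≤ η * ‖x.2‖ := by gcongr

namespace IsApproxCritical

variable {hv : IsTamePotential v C} {ε lam b α D : ℝ} {x : PathSpace F}

theorem multiplier_mul_meanKinetic_sq (h : hv.IsApproxCritical ε lam x) :
    lam * meanKinetic v x ^ 2 = maupertuis v x := by
  rw [maupertuis, ← h.multiplier_mul_meanKinetic]
  ring

theorem multiplier_mul_norm_impulse_zero_le (h : hv.IsApproxCritical ε lam x) :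
    lam * ‖hv.impulse x 0‖ ≤ ε * ‖x.2‖ := by
  simpa [residual, potentialGradient, norm_smul, abs_of_nonneg h.multiplier_nonneg]
    using (PathSpace.norm_fst_le _).trans h.norm_residual_le

theorem norm_sub_smul_impulse_le (h : hv.IsApproxCritical ε lam x) :
    ‖x.2 - lam • hv.impulse x‖ ≤ ε * ‖x.2‖ := by
  simpa [residual, potentialGradient] using (PathSpace.norm_snd_le _).trans h.norm_residual_le

theorem multiplier_mul_norm_impulse_le (h : hv.IsApproxCritical ε lam x) :
    lam * ‖hv.impulse x‖ ≤ (1 + ε) * ‖x.2‖ := by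
  calc lam * ‖hv.impulse x‖ = ‖lam • hv.impulse x‖ := by
        rw [norm_smul, Real.norm_of_nonneg h.multiplier_nonneg]
    _ ≤ ‖x.2‖ + ‖x.2 - lam • hv.impulse x‖ := norm_le_norm_add_norm_sub _ _
    _ ≤ (1 + ε) * ‖x.2‖ := by linarith [h.norm_sub_smul_impulse_le]

theorem multiplier_pos (h : hv.IsApproxCritical ε lam x) (hx : 0 < maupertuis v x) : 0 < lam :=
  h.multiplier_nonneg.lt_of_ne' fun hzero => by
    simp [← h.multiplier_mul_meanKinetic_sq, hzero] at hx

theorem norm_gradientAlong_sq_le (h : hv.IsApproxCritical ε lam x) (hε : ε ≤ 1) (hb : 0 < b)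
    (hx : b ≤ maupertuis v x) :
    ‖hv.gradientAlong x‖ ^ 2 ≤ C * (C / (2 * b) + 5) * meanKinetic v x := by
  have hC := hv.nonneg
  have hlam := h.multiplier_pos (hb.trans_le hx)
  have hb_le : b ≤ C / 2 * ‖x.2‖ ^ 2 := by
    rw [maupertuis] at hx
    nlinarith [le_of_abs_le (hv.abs_meanKinetic_le x), sq_nonneg ‖x.2‖]
  have hone : 1 ≤ C / (2 * b) * ‖x.2‖ ^ 2 := by
    rw [div_mul_eq_mul_div, one_le_div (by positivity)]
    linarith
  refine le_of_mul_le_mul_left ?_ hlam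
  calc lam * ‖hv.gradientAlong x‖ ^ 2
      ≤ C * (lam * ‖hv.impulse x 0‖) + C * (lam * ‖hv.impulse x‖ * ‖x.2‖) := by
        linarith [mul_le_mul_of_nonneg_left (hv.norm_gradientAlong_sq_le x) hlam.le]
    _ ≤ C * ‖x.2‖ + C * (2 * ‖x.2‖ * ‖x.2‖) := by
        have hzero : lam * ‖hv.impulse x 0‖ ≤ ‖x.2‖ :=
          h.multiplier_mul_norm_impulse_zero_le.trans
            (mul_le_of_le_one_left (norm_nonneg _) hε)
        have hnorm : lam * ‖hv.impulse x‖ ≤ 2 * ‖x.2‖ :=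
          h.multiplier_mul_norm_impulse_le.trans (by gcongr; linarith)
        gcongr
    _ ≤ C * ((C / (2 * b) * ‖x.2‖ ^ 2 + ‖x.2‖ ^ 2) / 2) + C * (2 * ‖x.2‖ * ‖x.2‖) := by
        gcongr
        nlinarith [sq_nonneg (‖x.2‖ - 1)]
    _ = C * (C / (2 * b) + 5) * (‖x.2‖ ^ 2 / 2) := by ring
    _ = lam * (C * (C / (2 * b) + 5) * meanKinetic v x) := by
        rw [← h.multiplier_mul_meanKinetic]
        ring

theorem abs_integral_energy_le (h : hv.IsApproxCritical ε lam x) (hε₀ : 0 ≤ ε) (hε : ε ≤ 1)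
    (hx : 0 < maupertuis v x) : |∫ t in (0 : ℝ)..1, hv.energy lam x t| ≤ 3 * C * ε := by
  have hlam := h.multiplier_pos hx
  set I := ‖lam • hv.impulse x‖ with hI
  have hdiff : |‖x.2‖ - I| ≤ ε * ‖x.2‖ :=
    (abs_norm_sub_norm_le _ _).trans h.norm_sub_smul_impulse_le
  have hsum : |I + ‖x.2‖| ≤ 3 * ‖x.2‖ := by
    have : I ≤ 2 * ‖x.2‖ := by
      nlinarith [neg_le_of_abs_le hdiff, norm_nonneg x.2]
    rw [abs_of_nonneg (by positivity)]
    linarith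
  have hmul : lam * ∫ t in (0 : ℝ)..1, hv.energy lam x t = -((‖x.2‖ - I) * (I + ‖x.2‖)) / 2 := by
    rw [integral_energy, mul_sub, h.multiplier_mul_meanKinetic, hI, norm_smul,
      Real.norm_of_nonneg hlam.le]
    ring
  refine le_of_mul_le_mul_left ?_ hlam
  calc lam * |∫ t in (0 : ℝ)..1, hv.energy lam x t|
      = |‖x.2‖ - I| * |I + ‖x.2‖| / 2 := by
        rw [← abs_of_pos hlam, ← abs_mul, abs_of_pos hlam, hmul, neg_div, abs_neg, abs_div, abs_mul,
          abs_two]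
    _ ≤ ε * ‖x.2‖ * (3 * ‖x.2‖) / 2 := by gcongr
    _ = lam * (3 * meanKinetic v x * ε) := by
        linear_combination (-3 * ε) * h.multiplier_mul_meanKinetic
    _ ≤ lam * (3 * C * ε) := by
        gcongr
        exact le_of_abs_le (hv.abs_meanKinetic_le x)

theorem abs_energy_le (h : hv.IsApproxCritical ε lam x) (hε₀ : 0 ≤ ε) (hε : ε ≤ 1)
    (hx : 0 < maupertuis v x) (hxα : maupertuis v x ≤ α) (hD : 0 ≤ D)
    (hgrad : ‖hv.gradientAlong x‖ ^ 2 ≤ D * meanKinetic v x) {t : ℝ} (ht : t ∈ Icc (0 : ℝ) 1) :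
    |hv.energy lam x t| ≤ (1 + 2 * D * α + 3 * C) * ε := by
  set G := ‖hv.gradientAlong x‖
  have hG : (G * ‖x.2‖) ^ 2 ≤ 2 * D * α := by
    calc (G * ‖x.2‖) ^ 2 ≤ D * meanKinetic v x * ‖x.2‖ ^ 2 := by
          rw [mul_pow]
          gcongr
      _ = 2 * D * maupertuis v x := by
          rw [maupertuis]
          ring
      _ ≤ 2 * D * α := by gcongr
  have hosc : G * ‖x.2 - lam • hv.impulse x‖ ≤ (1 + 2 * D * α) * ε := by
    calc G * ‖x.2 - lam • hv.impulse x‖ ≤ G * (ε * ‖x.2‖) := by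
          gcongr
          exact h.norm_sub_smul_impulse_le
      _ = G * ‖x.2‖ * ε := by ring
      _ ≤ (1 + 2 * D * α) * ε := by
          gcongr
          nlinarith [sq_nonneg (G * ‖x.2‖ - 1)]
  rw [add_mul]
  exact abs_le_add_of_abs_sub_le_of_abs_integral_le (hv.continuous_energy lam x)
    (fun s hs t ht => (hv.abs_energy_sub_le lam x hs ht).trans hosc)
    (h.abs_integral_energy_le hε₀ hε hx) ht

end IsApproxCritical

end IsTamePotential

/-! ### Compactness of almost critical paths -/

namespace PathSpace

variable {F : Type*} [NormedAddCommGroup F] [InnerProductSpace ℝ F] {v : F → ℝ} {x : PathSpace F}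

theorem meanKinetic_pos_of_maupertuis_pos (hx : 0 < maupertuis v x) : 0 < meanKinetic v x :=
  pos_of_mul_pos_right hx (by positivity)

theorem exists_neg_of_meanKinetic_pos (hx : 0 < meanKinetic v x) :
    ∃ t ∈ Icc (0 : ℝ) 1, v (path x t) < 0 := by
  by_contra! hnonneg
  exact hx.not_ge (neg_nonpos.mpr (intervalIntegral.integral_nonneg zero_le_one hnonneg))

theorem norm_fst_le_of_meanKinetic_pos {ρ : ℝ} (hρ : ∀ z, v z < 0 → ‖z‖ ≤ ρ)
    (hx : 0 < meanKinetic v x) : ‖x.1‖ ≤ ρ + ‖x.2‖ := by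
  obtain ⟨t, ht, hneg⟩ := exists_neg_of_meanKinetic_pos hx
  calc ‖x.1‖ ≤ ‖path x t‖ + ‖path x t - x.1‖ := norm_le_norm_add_norm_sub _ _
    _ ≤ ρ + ‖x.2‖ := add_le_add (hρ _ hneg) (norm_path_sub_fst_le x ht)

end PathSpace

namespace IsTamePotential

open PathSpace

variable {F : Type*} [NormedAddCommGroup F] [InnerProductSpace ℝ F] {v : F → ℝ} {C : ℝ}

section Bounds

variable [CompleteSpace F]

theorem IsApproxCritical.apply_path_le_energy {hv : IsTamePotential v C} {ε lam : ℝ}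
    {x : PathSpace F} (h : hv.IsApproxCritical ε lam x) (t : ℝ) :
    v (path x t) ≤ hv.energy lam x t :=
  le_add_of_nonneg_left (mul_nonneg (div_nonneg h.multiplier_nonneg zero_le_two) (sq_nonneg _))

theorem exists_le_meanKinetic (hv : IsTamePotential v C) {κ c b α : ℝ} (hκ : 0 < κ) (hc : 0 < c)
    (hreg : ∀ z, |v z| ≤ κ → c ≤ ‖∇ v z‖) (hb : 0 < b) (hbα : b ≤ α) :
    ∃ β > 0, ∃ ε₀ > 0, ∀ ε lam x, 0 ≤ ε → ε ≤ ε₀ → hv.IsApproxCritical ε lam x →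
      b ≤ maupertuis v x → maupertuis v x ≤ α → β ≤ meanKinetic v x := by
  have hC := hv.nonneg
  have hα := hb.trans_le hbα
  set D := C * (C / (2 * b) + 5)
  have hD : 0 ≤ D := by positivity
  set M := 1 + 2 * D * α + 3 * C
  have hM : 0 < M := by positivity
  refine ⟨κ / (1 + 2 * κ / c ^ 2 * D), by positivity, min 1 (κ / M), by positivity,
    fun ε lam x hε₀ hε h hx hxα => ?_⟩
  have hgrad := h.norm_gradientAlong_sq_le (hε.trans (min_le_left _ _)) hb hx
  rw [div_le_iff₀' (by positivity)]
  refine hv.le_mul_meanKinetic hκ hc hreg (fun t ht => ?_) hgrad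
  calc v (path x t) ≤ |hv.energy lam x t| := (h.apply_path_le_energy t).trans (le_abs_self _)
    _ ≤ M * ε := h.abs_energy_le hε₀ (hε.trans (min_le_left _ _)) (hb.trans_le hx) hxα hD hgrad ht
    _ ≤ M * (κ / M) := by
        gcongr
        exact hε.trans (min_le_right _ _)
    _ = κ := mul_div_cancel₀ _ hM.ne'

theorem lipschitzWith_impulse (hv : IsTamePotential v C) (x : PathSpace F) :
    LipschitzWith C.toNNReal (hv.impulse x) :=
  lipschitzWith_of_nnnorm_deriv_le (fun t => (hv.hasDerivAt_impulse x t).differentiableAt)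
    fun t => by
      rw [(hv.hasDerivAt_impulse x t).deriv, nnnorm_neg, ← NNReal.coe_le_coe, coe_nnnorm,
        Real.coe_toNNReal _ hv.nonneg]
      exact hv.norm_gradient_le _

theorem continuous_residual (hv : IsTamePotential v C) :
    Continuous fun p : ℝ × PathSpace F => hv.residual p.1 p.2 := by
  unfold residual
  fun_prop

theorem IsApproxCritical.bounded_of_le_meanKinetic {hv : IsTamePotential v C} {ε lam α β ρ : ℝ}
    {x : PathSpace F} (h : hv.IsApproxCritical ε lam x) (hρ : ∀ z, v z < 0 → ‖z‖ ≤ ρ) (hβ : 0 < β)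
    (hx : β ≤ meanKinetic v x) (hxα : maupertuis v x ≤ α) :
    lam ≤ α / β ^ 2 ∧ ‖x.1‖ ≤ ρ + (1 + 2 * α / β) ∧ ‖x.2‖ ≤ 1 + 2 * α / β := by
  have hlam : lam ≤ α / β ^ 2 := by
    rw [le_div_iff₀ (by positivity)]
    calc lam * β ^ 2 ≤ lam * meanKinetic v x ^ 2 := by
          gcongr
          exact h.multiplier_nonneg
      _ ≤ α := h.multiplier_mul_meanKinetic_sq.trans_le hxα
  have hsq : ‖x.2‖ ^ 2 ≤ 2 * α / β := by
    rw [le_div_iff₀ hβ]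
    calc ‖x.2‖ ^ 2 * β ≤ ‖x.2‖ ^ 2 * meanKinetic v x := by gcongr
      _ ≤ 2 * α := by
        rw [maupertuis] at hxα
        linarith
  have hu : ‖x.2‖ ≤ 1 + 2 * α / β := by nlinarith [sq_nonneg (‖x.2‖ - 1)]
  exact ⟨hlam, (norm_fst_le_of_meanKinetic_pos hρ (hβ.trans_le hx)).trans (by gcongr), hu⟩

end Bounds

section Compactness

variable [ProperSpace F] {hv : IsTamePotential v C} {ε lam : ℕ → ℝ} {x : ℕ → PathSpace F}

theorem IsApproxCritical.exists_subseq_tendsto_of_bounded {L A M : ℝ}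
    (hε : Tendsto ε atTop (𝓝 0))
    (h : ∀ᶠ k in atTop, hv.IsApproxCritical (ε k) (lam k) (x k) ∧ lam k ≤ L ∧ ‖(x k).1‖ ≤ A ∧
      ‖(x k).2‖ ≤ M) :
    ∃ φ : ℕ → ℕ, StrictMono φ ∧ ∃ l y, Tendsto (lam ∘ φ) atTop (𝓝 l) ∧
      Tendsto (x ∘ φ) atTop (𝓝 y) := by
  let S : Set (ℝ × F × Velocity F) :=
    Icc 0 L ×ˢ (closedBall 0 A ×ˢ {u : Velocity F | LipschitzWith C.toNNReal u ∧ u 1 = 0})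
  have hS : IsCompact S := isCompact_Icc.prod <| (isCompact_closedBall 0 A).prod <|
    Velocity.isCompact_setOf_lipschitzWith _ 1 0
  have hmem : ∀ᶠ k in atTop, (lam k, (x k).1, hv.impulse (x k)) ∈ S := h.mono fun k hk =>
    ⟨⟨hk.1.multiplier_nonneg, hk.2.1⟩, mem_closedBall_zero_iff.mpr hk.2.2.1,
      hv.lipschitzWith_impulse _, hv.impulse_one _⟩
  obtain ⟨⟨l, a, u⟩, -, φ, hφ, hlim⟩ := hS.tendsto_subseq' hmem.frequently
  refine ⟨φ, hφ, l, PathSpace.mk a (l • u), hlim.fst_nhds, ?_⟩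
  have hmain : Tendsto (fun k => PathSpace.mk (x (φ k)).1 (lam (φ k) • hv.impulse (x (φ k)))) atTop
      (𝓝 (PathSpace.mk a (l • u))) :=
    (continuous_mk _root_.continuous_fst _root_.continuous_snd).continuousAt.tendsto.comp
      (hlim.snd_nhds.fst_nhds.prodMk_nhds (hlim.fst_nhds.smul hlim.snd_nhds.snd_nhds))
  have herror : Tendsto (fun k => PathSpace.mk 0 ((x k).2 - lam k • hv.impulse (x k))) atTop
      (𝓝 0) := by
    refine squeeze_zero_norm' (a := fun k => |ε k| * M) (h.mono fun k hk => ?_)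
      (by simpa using hε.abs.mul_const M)
    calc ‖PathSpace.mk 0 ((x k).2 - lam k • hv.impulse (x k))‖
        ≤ ‖(x k).2 - lam k • hv.impulse (x k)‖ := by
          simpa using norm_le_add (PathSpace.mk 0 ((x k).2 - lam k • hv.impulse (x k)))
      _ ≤ ε k * ‖(x k).2‖ := hk.1.norm_sub_smul_impulse_le
      _ ≤ |ε k| * M := mul_le_mul (le_abs_self _) hk.2.2.2 (norm_nonneg _) (abs_nonneg _)
  have hsum := hmain.add (herror.comp hφ.tendsto_atTop)
  rw [add_zero] at hsum
  refine hsum.congr fun k => ?_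
  change PathSpace.mk _ _ + PathSpace.mk 0 _ = x (φ k)
  exact Prod.ext (by simp) (by simp)

theorem IsApproxCritical.of_tendsto {l : ℝ} {y : PathSpace F} (hε : Tendsto ε atTop (𝓝 0))
    (hl : Tendsto lam atTop (𝓝 l)) (hy : Tendsto x atTop (𝓝 y))
    (h : ∀ᶠ k in atTop, hv.IsApproxCritical (ε k) (lam k) (x k)) :
    hv.IsApproxCritical 0 l y where
  multiplier_nonneg := ge_of_tendsto hl (h.mono fun _ hk => hk.multiplier_nonneg)
  multiplier_mul_meanKinetic :=
    tendsto_nhds_unique_of_eventuallyEq (hl.mul ((hv.continuous_meanKinetic.tendsto y).comp hy))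
      (((PathSpace.continuous_snd.tendsto y).comp hy).norm.pow 2 |>.div_const 2)
      (h.mono fun _ hk => hk.multiplier_mul_meanKinetic)
  norm_residual_le :=
    le_of_tendsto_of_tendsto
      ((hv.continuous_residual.tendsto (l, y)).comp (hl.prodMk_nhds hy)).norm
      (hε.mul ((PathSpace.continuous_snd.tendsto y).comp hy).norm)
      (h.mono fun _ hk => hk.norm_residual_le)

theorem exists_isApproxCritical_zero {κ c b α ρ : ℝ} (hκ : 0 < κ) (hc : 0 < c)
    (hreg : ∀ z, |v z| ≤ κ → c ≤ ‖∇ v z‖) (hρ : ∀ z, v z < 0 → ‖z‖ ≤ ρ) (hb : 0 < b)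
    (hε₀ : ∀ k, 0 ≤ ε k) (hε : Tendsto ε atTop (𝓝 0))
    (h : ∀ k, hv.IsApproxCritical (ε k) (lam k) (x k))
    (hxb : ∀ k, b ≤ maupertuis v (x k)) (hxα : ∀ k, maupertuis v (x k) ≤ α) :
    ∃ l y, hv.IsApproxCritical 0 l y ∧ b ≤ maupertuis v y := by
  obtain ⟨β, hβ, ε₁, hε₁, hmean⟩ :=
    hv.exists_le_meanKinetic hκ hc hreg hb ((hxb 0).trans (hxα 0))
  have hbound := (hε.eventually_le_const hε₁).mono fun k hk =>
    And.intro (h k) <| (h k).bounded_of_le_meanKinetic hρ hβ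
      (hmean _ _ _ (hε₀ k) hk (h k) (hxb k) (hxα k)) (hxα k)
  obtain ⟨φ, hφ, l, y, hl, hy⟩ := IsApproxCritical.exists_subseq_tendsto_of_bounded hε hbound
  exact ⟨l, y, .of_tendsto (hε.comp hφ.tendsto_atTop) hl hy (.of_forall fun k => h (φ k)),
    ge_of_tendsto ((hv.isDescentField.continuous_functional.tendsto y).comp hy)
      (.of_forall fun k => hxb (φ k))⟩

end Compactness

end IsTamePotential

/-! ### Brake orbits -/

/-- A brake orbit `q`, with velocity `w`, of energy `h` in the potential `V`: a nonconstant solution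
of Newton's equation on `[0, l]` that is at rest at both ends. -/
structure IsBrakeOrbit {E : Type*} [NormedAddCommGroup E] [InnerProductSpace ℝ E] [CompleteSpace E]
    (V : E → ℝ) (h l : ℝ) (q w : ℝ → E) : Prop where
  length_pos : 0 < l
  hasDerivWithinAt_position : ∀ t ∈ Icc 0 l, HasDerivWithinAt q (w t) (Icc 0 l) t
  hasDerivWithinAt_velocity : ∀ t ∈ Icc 0 l, HasDerivWithinAt w (-∇ V (q t)) (Icc 0 l) t
  velocity_zero : w 0 = 0
  velocity_length : w l = 0
  energy_eq : ∀ t ∈ Icc 0 l, V (q t) + ‖w t‖ ^ 2 / 2 = h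
  exists_velocity_ne_zero : ∃ t ∈ Icc 0 l, w t ≠ 0

namespace IsBrakeOrbit

variable {E : Type*} [NormedAddCommGroup E] [InnerProductSpace ℝ E] [CompleteSpace E]
  {V : E → ℝ} {h l : ℝ} {q w : ℝ → E}

theorem potential_le (hq : IsBrakeOrbit V h l q w) {t : ℝ} (ht : t ∈ Icc 0 l) : V (q t) ≤ h := by
  linarith [hq.energy_eq t ht, sq_nonneg ‖w t‖]

theorem congr_potential {U : E → ℝ} {k : ℝ} (hq : IsBrakeOrbit V h l q w)
    (hU : ∀ z, V z ≤ h → U =ᶠ[𝓝 z] fun y => V y + k) : IsBrakeOrbit U (h + k) l q w where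
  length_pos := hq.length_pos
  hasDerivWithinAt_position := hq.hasDerivWithinAt_position
  hasDerivWithinAt_velocity t ht := by
    have hgrad : ∇ U (q t) = ∇ V (q t) := by
      rw [(hU _ (hq.potential_le ht)).gradient_eq, gradient, gradient, fderiv_add_const]
    rw [hgrad]
    exact hq.hasDerivWithinAt_velocity t ht
  velocity_zero := hq.velocity_zero
  velocity_length := hq.velocity_length
  energy_eq t ht := by
    rw [(hU _ (hq.potential_le ht)).eq_of_nhds, add_right_comm, hq.energy_eq t ht]
  exists_velocity_ne_zero := hq.exists_velocity_ne_zero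

theorem uniqueDiffOn (hq : IsBrakeOrbit V h l q w) : UniqueDiffOn ℝ (Icc 0 l) :=
  uniqueDiffOn_Icc hq.length_pos

theorem zero_mem (hq : IsBrakeOrbit V h l q w) : 0 ∈ Icc 0 l := left_mem_Icc.mpr hq.length_pos.le

theorem derivWithin_eq (hq : IsBrakeOrbit V h l q w) {t : ℝ} (ht : t ∈ Icc 0 l) :
    derivWithin q (Icc 0 l) t = w t :=
  (hq.hasDerivWithinAt_position t ht).derivWithin (hq.uniqueDiffOn t ht)

theorem derivWithin_derivWithin_eq (hq : IsBrakeOrbit V h l q w) {t : ℝ} (ht : t ∈ Icc 0 l) :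
    derivWithin (derivWithin q (Icc 0 l)) (Icc 0 l) t = -∇ V (q t) := by
  rw [derivWithin_congr (fun s hs => hq.derivWithin_eq hs) (hq.derivWithin_eq ht)]
  exact (hq.hasDerivWithinAt_velocity t ht).derivWithin (hq.uniqueDiffOn t ht)

theorem contDiffOn (hq : IsBrakeOrbit V h l q w) (hV : Continuous (∇ V)) :
    ContDiffOn ℝ 2 q (Icc 0 l) := by
  have hqc : ContinuousOn q (Icc 0 l) := fun t ht =>
    (hq.hasDerivWithinAt_position t ht).continuousWithinAt
  have hw : ContDiffOn ℝ 1 w (Icc 0 l) := by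
    rw [contDiffOn_one_iff_derivWithin hq.uniqueDiffOn]
    exact ⟨fun t ht => (hq.hasDerivWithinAt_velocity t ht).differentiableWithinAt,
      (hV.comp_continuousOn hqc).neg.congr fun t ht =>
        (hq.hasDerivWithinAt_velocity t ht).derivWithin (hq.uniqueDiffOn t ht)⟩
  rw [← one_add_one_eq_two, contDiffOn_succ_iff_derivWithin hq.uniqueDiffOn]
  exact ⟨fun t ht => (hq.hasDerivWithinAt_position t ht).differentiableWithinAt, by simp,
    hw.congr fun t ht => hq.derivWithin_eq ht⟩

theorem exists_apply_ne_apply_zero (hq : IsBrakeOrbit V h l q w) : ∃ t ∈ Icc 0 l, q t ≠ q 0 := by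
  by_contra! hconst
  obtain ⟨t, ht, hwt⟩ := hq.exists_velocity_ne_zero
  refine hwt ?_
  rw [← hq.derivWithin_eq ht, derivWithin_congr hconst (hconst t ht), derivWithin_fun_const,
    Pi.zero_apply]

end IsBrakeOrbit

theorem PathSpace.exists_velocity_ne_zero {F : Type*} [NormedAddCommGroup F]
    [InnerProductSpace ℝ F] {v : F → ℝ} {x : PathSpace F} (hx : 0 < maupertuis v x) :
    ∃ t ∈ Icc (0 : ℝ) 1, x.2 t ≠ 0 := by
  by_contra! hzero
  have hnorm : ‖x.2‖ ≤ 0 :=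
    Velocity.norm_le_of_forall_mem_Icc le_rfl fun t ht => by simp [hzero t ht]
  rw [maupertuis, le_antisymm hnorm (norm_nonneg _)] at hx
  simp at hx

namespace IsTamePotential

open PathSpace

variable {F : Type*} [NormedAddCommGroup F] [InnerProductSpace ℝ F] [CompleteSpace F]
  {v : F → ℝ} {C : ℝ}

namespace IsApproxCritical

variable {hv : IsTamePotential v C} {lam : ℝ} {x : PathSpace F}

theorem velocity_eq (h : hv.IsApproxCritical 0 lam x) {t : ℝ} (ht : t ∈ Icc (0 : ℝ) 1) :
    x.2 t = lam • hv.impulse x t := by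
  have hzero : ‖x.2 - lam • hv.impulse x‖ = 0 :=
    le_antisymm (by simpa using h.norm_sub_smul_impulse_le) (norm_nonneg _)
  exact sub_eq_zero.mp (Velocity.apply_eq_zero_of_norm_eq_zero hzero ht)

theorem impulse_zero_eq_zero (h : hv.IsApproxCritical 0 lam x) (hx : 0 < maupertuis v x) :
    hv.impulse x 0 = 0 := by
  have hle := h.multiplier_mul_norm_impulse_zero_le
  rw [zero_mul] at hle
  exact norm_le_zero_iff.mp (nonpos_of_mul_nonpos_right hle (h.multiplier_pos hx))

theorem energy_eq_zero (h : hv.IsApproxCritical 0 lam x) (hx : 0 < maupertuis v x) {t : ℝ}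
    (ht : t ∈ Icc (0 : ℝ) 1) : hv.energy lam x t = 0 := by
  have hC := hv.nonneg
  simpa using h.abs_energy_le le_rfl zero_le_one hx le_rfl (by positivity)
    (h.norm_gradientAlong_sq_le zero_le_one hx le_rfl) ht

theorem isBrakeOrbit (h : hv.IsApproxCritical 0 lam x) (hx : 0 < maupertuis v x) :
    IsBrakeOrbit v 0 √lam (fun t => path x (t / √lam))
      fun t => √lam • hv.impulse x (t / √lam) := by
  have hμ : 0 < √lam := Real.sqrt_pos.mpr (h.multiplier_pos hx)
  have hmem : ∀ t ∈ Icc 0 √lam, t / √lam ∈ Icc (0 : ℝ) 1 := fun t ht =>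
    ⟨div_nonneg ht.1 hμ.le, (div_le_one hμ).mpr ht.2⟩
  have hdiv : ∀ t, HasDerivAt (fun t => t / √lam) (1 / √lam) t := fun t =>
    (hasDerivAt_id t).div_const _
  have hvel : ∀ t ∈ Icc 0 √lam, x.2 (t / √lam) = √lam • √lam • hv.impulse x (t / √lam) :=
    fun t ht => by
      rw [h.velocity_eq (hmem t ht), smul_smul, Real.mul_self_sqrt h.multiplier_nonneg]
  refine ⟨hμ, fun t ht => ?_, fun t _ => ?_, ?_, ?_, fun t ht => ?_, ?_⟩
  · refine (((hasDerivAt_path x _).scomp t (hdiv t)).congr_deriv ?_).hasDerivWithinAt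
    rw [hvel t ht, smul_smul, one_div_mul_cancel hμ.ne', one_smul]
  · refine ((((hv.hasDerivAt_impulse x _).scomp t (hdiv t)).const_smul √lam).congr_deriv
      ?_).hasDerivWithinAt
    rw [smul_smul, mul_one_div_cancel hμ.ne', one_smul]
  · rw [zero_div, h.impulse_zero_eq_zero hx, smul_zero]
  · rw [div_self hμ.ne', impulse_one, smul_zero]
  · rw [← h.energy_eq_zero hx (hmem t ht), energy, norm_smul, mul_pow, Real.norm_of_nonneg hμ.le,
      Real.sq_sqrt h.multiplier_nonneg]
    ring
  · obtain ⟨t, ht, hne⟩ := exists_velocity_ne_zero hx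
    refine ⟨√lam * t, ⟨by nlinarith [ht.1], by nlinarith [ht.2]⟩, fun hzero => hne ?_⟩
    rw [mul_div_cancel_left₀ _ hμ.ne', smul_eq_zero_iff_right hμ.ne'] at hzero
    rw [h.velocity_eq ht, hzero, smul_zero]

end IsApproxCritical

end IsTamePotential

/-! ### Linking by uniform motions -/

theorem sub_mul_le_integral {f : ℝ → ℝ} (hf : Continuous f) {C k c d : ℝ} (hcd : c ≤ d)
    (hC : ∀ t, -C ≤ f t) (hk : 0 ≤ k + C) (hout : ∀ t, t ∉ Icc c d → k ≤ f t) :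
    k - (k + C) * (d - c) ≤ ∫ t in (0 : ℝ)..1, f t := by
  have hind : Integrable ((Icc c d).indicator fun _ => k + C) :=
    (integrable_indicator_iff measurableSet_Icc).mpr (by simp)
  have hpoint : ∀ t, k - f t ≤ (Icc c d).indicator (fun _ => k + C) t := fun t => by
    by_cases ht : t ∈ Icc c d
    · rw [indicator_of_mem ht]
      linarith [hC t]
    · rw [indicator_of_notMem ht]
      linarith [hout t ht]
  have hle : ∫ t in (0 : ℝ)..1, (k - f t) ≤ (k + C) * (d - c) :=
    calc ∫ t in (0 : ℝ)..1, (k - f t)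
        ≤ ∫ t in (0 : ℝ)..1, (Icc c d).indicator (fun _ => k + C) t :=
          intervalIntegral.integral_mono_on zero_le_one
            (Continuous.intervalIntegrable (by fun_prop) _ _) hind.intervalIntegrable
            fun t _ => hpoint t
      _ ≤ ∫ t, (Icc c d).indicator (fun _ => k + C) t := by
          rw [intervalIntegral.integral_of_le zero_le_one]
          exact setIntegral_le_integral hind
            (.of_forall fun t => indicator_nonneg (fun _ _ => hk) t)
      _ = (k + C) * (d - c) := by
          rw [integral_indicator measurableSet_Icc, setIntegral_const, smul_eq_mul,
            Real.volume_real_Icc_of_le hcd, mul_comm]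
  rw [intervalIntegral.integral_sub intervalIntegrable_const (hf.intervalIntegrable _ _),
    intervalIntegral.integral_const, sub_zero, one_smul] at hle
  linarith

namespace Velocity

variable {F : Type*} [NormedAddCommGroup F] [InnerProductSpace ℝ F]

@[simp] theorem norm_const (a : F) : ‖const a‖ = ‖a‖ :=
  (sq_eq_sq₀ (norm_nonneg _) (norm_nonneg _)).mp <| by simp [norm_sq_eq_integral]

@[fun_prop]
theorem continuous_const : Continuous (const (F := F)) :=
  continuous_ofContinuousMap.comp ContinuousMap.continuous_const'

end Velocity

namespace PathSpace

variable {F : Type*} [NormedAddCommGroup F] [InnerProductSpace ℝ F]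

/-- The uniform motions in the direction `e`, parametrised so that `0` is sent to the one with
initial point `z₀` and speed `r`; motions of negative speed are replaced by constant paths. -/
noncomputable def linkingMap (z₀ e : F) (r : ℝ) (z : WithLp 2 (F × ℝ)) : PathSpace F :=
  mk (z₀ + z.fst) (.const (max (r + z.snd) 0 • e))

/-- The map whose zeros are the paths with initial point `z₀` and velocity of norm `r`. -/
noncomputable def linkingDefect (z₀ : F) (r : ℝ) (x : PathSpace F) : WithLp 2 (F × ℝ) :=
  .toLp 2 (x.1 - z₀, ‖x.2‖ - r)

theorem continuous_linkingMap (z₀ e : F) (r : ℝ) : Continuous (linkingMap z₀ e r) := by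
  unfold linkingMap
  fun_prop

theorem continuous_linkingDefect (z₀ : F) (r : ℝ) : Continuous (linkingDefect z₀ r) := by
  unfold linkingDefect
  fun_prop

theorem norm_snd_linkingMap {e : F} (he : ‖e‖ = 1) (z₀ : F) (r : ℝ) (z : WithLp 2 (F × ℝ)) :
    ‖(linkingMap z₀ e r z).2‖ = max (r + z.snd) 0 := by
  simp [linkingMap, norm_smul, he]

theorem not_sameRay_linkingDefect_linkingMap {e : F} (he : ‖e‖ = 1) (z₀ : F) {r : ℝ} (hr : 0 < r)
    {z : WithLp 2 (F × ℝ)} (hz : z ≠ 0) :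
    ¬SameRay ℝ (linkingDefect z₀ r (linkingMap z₀ e r z)) (-z) := by
  intro hray
  have hnonneg : 0 ≤ ⟪linkingDefect z₀ r (linkingMap z₀ e r z), -z⟫ := by
    obtain ⟨c, hc, h⟩ := hray.exists_nonneg_right (neg_ne_zero.mpr hz)
    rw [h, real_inner_smul_left]
    exact mul_nonneg hc real_inner_self_nonneg
  have hinner : ⟪linkingDefect z₀ r (linkingMap z₀ e r z), -z⟫
      = -(‖z.fst‖ ^ 2 + (max (r + z.snd) 0 - r) * z.snd) := by
    rw [inner_neg_right, WithLp.prod_inner_apply, linkingDefect, norm_snd_linkingMap he]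
    simp [linkingMap, mul_comm]
  rw [hinner, neg_nonneg] at hnonneg
  have hsq : ‖z‖ ^ 2 = ‖z.fst‖ ^ 2 + z.snd ^ 2 := by
    rw [WithLp.prod_norm_sq_eq_of_L2, Real.norm_eq_abs, sq_abs]
  have hpos : 0 < ‖z‖ ^ 2 := by positivity
  rcases le_total 0 (r + z.snd) with hs | hs
  · rw [max_eq_left hs] at hnonneg
    linarith
  · rw [max_eq_right hs] at hnonneg
    nlinarith [sq_nonneg ‖z.fst‖]

end PathSpace

namespace IsTamePotential

open PathSpace

variable {F : Type*} [NormedAddCommGroup F] [InnerProductSpace ℝ F] [CompleteSpace F]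
  {v : F → ℝ} {C r ρ : ℝ} {z₀ e : F}

theorem le_maupertuis_of_closedBall (hv : IsTamePotential v C) {δ : ℝ} {x : PathSpace F}
    (hball : ∀ z ∈ closedBall x.1 ‖x.2‖, v z ≤ -δ) : ‖x.2‖ ^ 2 / 2 * δ ≤ maupertuis v x := by
  have hcont := hv.differentiable.continuous
  have hle : ∫ t in (0 : ℝ)..1, v (path x t) ≤ ∫ _ in (0 : ℝ)..1, -δ :=
    intervalIntegral.integral_mono_on zero_le_one
      (Continuous.intervalIntegrable (by fun_prop) _ _) intervalIntegrable_const fun t ht =>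
      hball _ (mem_closedBall_iff_norm.mpr (norm_path_sub_fst_le x ht))
  rw [intervalIntegral.integral_const, sub_zero, one_smul] at hle
  unfold maupertuis meanKinetic
  gcongr
  linarith

theorem maupertuis_const_nonpos (hv : IsTamePotential v C) (hout : ∀ z, ρ < ‖z‖ → 1 ≤ v z)
    (hρ : 0 ≤ ρ) (he : ‖e‖ = 1) (a : F) {s : ℝ} (hs : 0 < s) (hsρ : 2 * (1 + C) * ρ ≤ s) :
    maupertuis v (PathSpace.mk a (.const (s • e))) ≤ 0 := by
  have hcont := hv.differentiable.continuous
  have hC := hv.nonneg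
  have hpath : ∀ t, path (PathSpace.mk a (.const (s • e))) t = a + (t * s) • e := fun t => by
    simp [path, smul_smul, mul_comm]
  have hout' : ∀ t, t ∉ Icc ((-ρ - ⟪a, e⟫) / s) ((ρ - ⟪a, e⟫) / s) →
      1 ≤ v (path (PathSpace.mk a (.const (s • e))) t) := fun t ht => by
    refine hout _ (lt_of_not_ge fun hle => ht ?_)
    have habs : |⟪a, e⟫ + t * s| ≤ ρ :=
      calc |⟪a, e⟫ + t * s| = |⟪a + (t * s) • e, e⟫| := by
            simp [inner_add_left, real_inner_smul_left, he]
        _ ≤ ‖path (PathSpace.mk a (.const (s • e))) t‖ * ‖e‖ := by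
            rw [hpath]
            exact abs_real_inner_le_norm _ _
        _ ≤ ρ := by rwa [he, mul_one]
    rw [_root_.abs_le] at habs
    constructor
    · rw [div_le_iff₀ hs]
      linarith
    · rw [le_div_iff₀ hs]
      linarith
  refine mul_nonpos_of_nonneg_of_nonpos (by positivity) (neg_nonpos.mpr ?_)
  refine le_trans ?_ (sub_mul_le_integral (by fun_prop) (by gcongr; linarith)
    (fun t => neg_le_of_abs_le (hv.abs_le _)) (by positivity) hout')
  rw [← sub_div, ← mul_div_assoc, sub_nonneg, div_le_one hs]
  linarith

theorem norm_le_of_maupertuis_linkingMap_pos (hv : IsTamePotential v C)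
    (hout : ∀ z, ρ < ‖z‖ → 1 ≤ v z) (hρ : 0 ≤ ρ) (he : ‖e‖ = 1) (hr : 0 < r)
    {z : WithLp 2 (F × ℝ)} (hz : 0 < maupertuis v (linkingMap z₀ e r z)) :
    ‖z‖ ≤ ρ + ‖z₀‖ + r + 4 * (1 + C) * ρ := by
  have hnorm : 0 < ‖(linkingMap z₀ e r z).2‖ :=
    (norm_nonneg _).lt_of_ne' fun h => hz.ne' (by simp [maupertuis, h])
  rw [norm_snd_linkingMap he, lt_max_iff, or_iff_left (lt_irrefl _)] at hnorm
  have hspeed : r + z.snd < 2 * (1 + C) * ρ := by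
    by_contra! hle
    have hJ := hv.maupertuis_const_nonpos hout hρ he (z₀ + z.fst) hnorm hle
    rw [linkingMap, max_eq_left hnorm.le] at hz
    exact hz.not_ge hJ
  have hinitial : ‖z₀ + z.fst‖ ≤ ρ + (r + z.snd) := by
    have hle := norm_fst_le_of_meanKinetic_pos (x := linkingMap z₀ e r z)
      (fun y hy => not_lt.mp fun hρy => by linarith [hout y hρy])
      (meanKinetic_pos_of_maupertuis_pos hz)
    rwa [norm_snd_linkingMap he, max_eq_left hnorm.le] at hle
  have hfst : ‖z.fst‖ ≤ ‖z₀ + z.fst‖ + ‖z₀‖ := by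
    simpa using norm_sub_le (z₀ + z.fst) z₀
  have hsnd : |z.snd| ≤ 2 * (1 + C) * ρ + r := by
    rw [_root_.abs_le]
    have := hv.nonneg
    constructor <;> nlinarith
  have hnorm_le : ‖z‖ ≤ ‖z.fst‖ + |z.snd| := by
    refine (pow_le_pow_iff_left₀ (norm_nonneg _) (by positivity) two_ne_zero).mp ?_
    rw [WithLp.prod_norm_sq_eq_of_L2, Real.norm_eq_abs]
    nlinarith [norm_nonneg z.fst, abs_nonneg z.snd]
  linarith

theorem exists_le_norm_gradient_of_abs_le [ProperSpace F] (hv : IsTamePotential v C)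
    (hout : ∀ z, ρ < ‖z‖ → 1 ≤ v z) (hreg : ∀ z, v z = 0 → ∇ v z ≠ 0) :
    ∃ κ > 0, ∀ z, |v z| ≤ κ → κ ≤ ‖∇ v z‖ := by
  have hcont := hv.differentiable.continuous
  have hcont' := hv.continuous_gradient
  have hpos : ∀ z, 0 < max |v z| ‖∇ v z‖ := fun z => by
    by_cases hz : v z = 0
    · exact lt_max_of_lt_right (norm_pos_iff.mpr (hreg z hz))
    · exact lt_max_of_lt_left (abs_pos.mpr hz)
  obtain ⟨m, hm, hmin⟩ := (isCompact_closedBall (0 : F) ρ).exists_forall_le'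
    (f := fun z => max |v z| ‖∇ v z‖) (by fun_prop) fun z _ => hpos z
  refine ⟨min m 1 / 2, by positivity, fun z hz => ?_⟩
  have : min m 1 / 2 < min m 1 := half_lt_self (by positivity)
  have hzρ : ‖z‖ ≤ ρ := not_lt.mp fun hρz => by
    linarith [hout z hρz, le_abs_self (v z), min_le_right m 1]
  rcases le_max_iff.mp (hmin z (mem_closedBall_zero_iff.mpr hzρ)) with h | h
  · linarith [min_le_left m 1]
  · linarith [min_le_left m 1]

theorem exists_pos_forall_exists_norm_mul_norm_maupertuisGradient_lt [FiniteDimensional ℝ F]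
    [Nontrivial F] (hv : IsTamePotential v C) (hout : ∀ z, ρ < ‖z‖ → 1 ≤ v z) (hz₀ : v z₀ < 0) :
    ∃ b > 0, ∃ α, ∀ ε > 0, ∃ x, b ≤ maupertuis v x ∧ maupertuis v x ≤ α ∧
      ‖x.2‖ * ‖hv.maupertuisGradient x‖ < ε := by
  have hρ : 0 ≤ ρ := (norm_nonneg z₀).trans <| not_lt.mp fun h => by linarith [hout z₀ h]
  have hC := hv.nonneg
  obtain ⟨e, he⟩ := exists_norm_eq F zero_le_one
  obtain ⟨r, hr, hball⟩ := nhds_basis_closedBall.eventually_iff.mp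
    (hv.differentiable.continuous.continuousAt.eventually_le_const (by linarith : v z₀ < v z₀ / 2))
  have hlinked : ∀ x, linkingDefect z₀ r x = 0 → r ^ 2 / 2 * (-(v z₀ / 2)) ≤ maupertuis v x := by
    intro x hx
    obtain ⟨rfl, rfl⟩ : x.1 = z₀ ∧ ‖x.2‖ = r := by
      simpa [linkingDefect, sub_eq_zero] using hx
    exact hv.le_maupertuis_of_closedBall fun z hz => by simpa using hball hz
  have hRpos : 0 < ρ + ‖z₀‖ + r + 4 * (1 + C) * ρ + 1 := by positivity
  have hcont : Continuous fun z => maupertuis v (linkingMap z₀ e r z) :=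
    hv.isDescentField.continuous_functional.comp (continuous_linkingMap z₀ e r)
  obtain ⟨α, hα⟩ := (isCompact_closedBall (0 : WithLp 2 (F × ℝ))
    (ρ + ‖z₀‖ + r + 4 * (1 + C) * ρ + 1)).bddAbove_image hcont.continuousOn
  have hb : 0 < r ^ 2 / 2 * (-(v z₀ / 2)) := mul_pos (by positivity) (by linarith)
  refine ⟨_, hb, α, fun ε hε => ?_⟩
  refine hv.isDescentField.exists_almost_critical_of_linking hb hε
    (continuous_linkingMap z₀ e r) (continuous_linkingDefect z₀ r) hRpos ?_ ?_
    (fun z hz => hα (mem_image_of_mem _ hz)) hlinked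
  · intro z hz
    exact not_sameRay_linkingDefect_linkingMap he z₀ hr (norm_pos_iff.mp (hz ▸ hRpos))
  · intro z hz
    by_contra! hpos
    linarith [hv.norm_le_of_maupertuis_linkingMap_pos hout hρ he hr hpos]

theorem exists_isBrakeOrbit [FiniteDimensional ℝ F] [Nontrivial F] (hv : IsTamePotential v C)
    (hout : ∀ z, ρ < ‖z‖ → 1 ≤ v z) (hreg : ∀ z, v z = 0 → ∇ v z ≠ 0) (hz₀ : v z₀ < 0) :
    ∃ l q w, IsBrakeOrbit v 0 l q w := by
  have : ProperSpace F := .of_locallyCompactSpace ℝ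
  obtain ⟨b, hb, α, hx⟩ :=
    hv.exists_pos_forall_exists_norm_mul_norm_maupertuisGradient_lt hout hz₀
  choose x hxb hxα hgrad using fun k : ℕ => hx (1 / (k + 1)) Nat.one_div_pos_of_nat
  obtain ⟨κ, hκ, hκreg⟩ := hv.exists_le_norm_gradient_of_abs_le hout hreg
  have hε : Tendsto (fun k : ℕ => 1 / ((k : ℝ) + 1) / (2 * b)) atTop (𝓝 0) := by
    simpa using tendsto_one_div_add_atTop_nhds_zero_nat.div_const (2 * b)
  obtain ⟨lam, y, hy, hyb⟩ := exists_isApproxCritical_zero hκ hκ hκreg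
    (fun z hz => not_lt.mp fun hρz => by linarith [hout z hρz]) hb
    (fun k => by positivity) hε
    (fun k => hv.isApproxCritical_of_norm_mul_norm_maupertuisGradient_le hb (hxb k) (hgrad k).le)
    hxb hxα
  exact ⟨_, _, _, hy.isBrakeOrbit (hb.trans_le hyb)⟩

end IsTamePotential

/-! ### Truncation of the potential -/

section Truncation

variable {E : Type*} [NormedAddCommGroup E] [InnerProductSpace ℝ E]

/-- The potential `V - h`, interpolated to the constant `1` by the bump function `φ`. -/
noncomputable def truncatedPotential (φ : ContDiffBump (0 : E)) (V : E → ℝ) (h : ℝ) (x : E) : ℝ :=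
  1 + φ x * (V x - h - 1)

variable {φ : ContDiffBump (0 : E)} {V : E → ℝ} {h : ℝ} {x : E}

theorem contDiff_truncatedPotential (hV : ContDiff ℝ 2 V) :
    ContDiff ℝ 2 (truncatedPotential φ V h) :=
  contDiff_const.add (φ.contDiff.mul ((hV.sub contDiff_const).sub contDiff_const))

theorem truncatedPotential_eq_one (hx : φ.rOut ≤ ‖x‖) : truncatedPotential φ V h x = 1 := by
  rw [truncatedPotential, φ.zero_of_le_dist (by simpa using hx), zero_mul, add_zero]

theorem truncatedPotential_eventuallyEq (hx : ‖x‖ < φ.rIn) :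
    truncatedPotential φ V h =ᶠ[𝓝 x] fun y => V y - h := by
  filter_upwards [φ.eventuallyEq_one_of_mem_ball (mem_ball_zero_iff.mpr hx)] with y hy
  rw [truncatedPotential, hy, Pi.one_apply]
  ring

theorem le_of_truncatedPotential_nonpos (hx : truncatedPotential φ V h x ≤ 0) : V x ≤ h := by
  unfold truncatedPotential at hx
  by_contra! hlt
  have hnonneg : 0 ≤ φ x * (V x - h) := mul_nonneg (φ.nonneg' x) (by linarith)
  have hone : φ x = 1 := le_antisymm φ.le_one (by linarith)
  rw [hone] at hx
  linarith

theorem isBounded_sublevel_of_isCompact_energy_level [Nontrivial E]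
    (hcompact : IsCompact {x : E × E | V x.1 + ‖x.2‖ ^ 2 / 2 = h}) :
    Bornology.IsBounded {x | V x ≤ h} := by
  refine (hcompact.image continuous_fst).isBounded.subset fun x (hx : V x ≤ h) => ?_
  obtain ⟨p, hp⟩ := exists_norm_eq E (Real.sqrt_nonneg (2 * (h - V x)))
  refine ⟨(x, p), ?_, rfl⟩
  rw [mem_ofPred_eq, hp, Real.sq_sqrt (by linarith)]
  ring

variable [CompleteSpace E]

theorem exists_lt_of_gradient_ne_zero {v : E → ℝ} (hx : ∇ v x ≠ 0) : ∃ z, v z < v x := by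
  by_contra! hmin
  refine hx ?_
  rw [gradient, IsLocalMin.fderiv_eq_zero (.of_forall hmin), map_zero]

theorem exists_isTamePotential_of_hasCompactSupport_sub {v : E → ℝ} {k : ℝ} (hv : ContDiff ℝ 2 v)
    (hk : HasCompactSupport fun x => v x - k) : ∃ C, IsTamePotential v C := by
  have hgrad : ∇ v = fun x => (InnerProductSpace.toDual ℝ E).symm (fderiv ℝ (fun y => v y - k) x) :=
    funext fun x => by rw [fderiv_sub_const, gradient]
  have hgrad_supp : HasCompactSupport (∇ v) := by
    rw [hgrad]
    exact (hk.fderiv (𝕜 := ℝ)).comp_left (map_zero _)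
  obtain ⟨C₀, hC₀⟩ := hk.exists_bound_of_continuous (hv.continuous.sub continuous_const)
  obtain ⟨C₁, hC₁⟩ := hgrad_supp.exists_bound_of_continuous (contDiff_gradient hv).continuous
  obtain ⟨C₂, hC₂⟩ := (hgrad_supp.fderiv (𝕜 := ℝ)).exists_bound_of_continuous
    ((contDiff_gradient hv).continuous_fderiv one_ne_zero)
  refine ⟨max (C₀ + |k|) (max C₁ C₂), hv, fun x => le_max_of_le_left ?_,
    fun x => le_max_of_le_right (le_max_of_le_left (hC₁ x)),
    fun x => le_max_of_le_right (le_max_of_le_right (hC₂ x))⟩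
  calc |v x| = |v x - k + k| := by rw [sub_add_cancel]
    _ ≤ |v x - k| + |k| := abs_add_le _ _
    _ ≤ C₀ + |k| := by gcongr; exact hC₀ x

theorem exists_isTamePotential_truncatedPotential [FiniteDimensional ℝ E]
    (φ : ContDiffBump (0 : E)) (hV : ContDiff ℝ 2 V) (h : ℝ) :
    ∃ C, IsTamePotential (truncatedPotential φ V h) C := by
  refine exists_isTamePotential_of_hasCompactSupport_sub (k := 1)
    (contDiff_truncatedPotential hV) ?_
  have hsub : (fun x => truncatedPotential φ V h x - 1) = φ * fun x => V x - h - 1 :=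
    funext fun x => by simp [truncatedPotential]
  rw [hsub]
  exact φ.hasCompactSupport.mul_right

end Truncation

section BrakeOrbit

variable {E : Type*} [NormedAddCommGroup E] [InnerProductSpace ℝ E] [FiniteDimensional ℝ E]
  [CompleteSpace E] {V : E → ℝ} {h : ℝ}

theorem exists_isBrakeOrbit_of_isBounded_sublevel [Nontrivial E] (hV : ContDiff ℝ 2 V)
    (hbdd : Bornology.IsBounded {x | V x ≤ h}) (hreg : ∀ x, V x = h → ∇ V x ≠ 0)
    (hmeet : ∃ q₀, V q₀ = h) : ∃ l q w, IsBrakeOrbit V h l q w := by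
  obtain ⟨ρ, hρ, hbound⟩ := hbdd.exists_pos_norm_lt
  let φ : ContDiffBump (0 : E) := ⟨ρ, ρ + 1, hρ, lt_add_one ρ⟩
  have hgerm : ∀ z, V z ≤ h → truncatedPotential φ V h =ᶠ[𝓝 z] fun y => V y - h := fun z hz =>
    truncatedPotential_eventuallyEq (hbound z hz)
  have hgrad : ∀ z, V z = h → ∇ (truncatedPotential φ V h) z ≠ 0 := fun z hz => by
    rw [(hgerm z hz.le).gradient_eq, gradient, fderiv_sub_const]
    exact hreg z hz
  obtain ⟨C, hv⟩ := exists_isTamePotential_truncatedPotential φ hV h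
  obtain ⟨q₀, hq₀⟩ := hmeet
  obtain ⟨z₀, hz₀⟩ := exists_lt_of_gradient_ne_zero (hgrad q₀ hq₀)
  rw [(hgerm q₀ hq₀.le).eq_of_nhds, hq₀, sub_self] at hz₀
  have hregular : ∀ z, truncatedPotential φ V h z = 0 → ∇ (truncatedPotential φ V h) z ≠ 0 :=
    fun z hz => hgrad z <| by
      have heq := (hgerm z (le_of_truncatedPotential_nonpos hz.le)).eq_of_nhds
      linarith
  obtain ⟨l, q, w, hq⟩ := hv.exists_isBrakeOrbit (ρ := ρ + 1)
    (fun z hz => (truncatedPotential_eq_one hz.le).ge) hregular hz₀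
  refine ⟨l, q, w, zero_add h ▸ hq.congr_potential fun z hz => ?_⟩
  filter_upwards [hgerm z (le_of_truncatedPotential_nonpos hz)] with y hy
  rw [hy, sub_add_cancel]

theorem brake_orbit_exists_general (hV : ContDiff ℝ 2 V)
    (hcompact : IsCompact {x : E × E | V x.1 + ‖x.2‖ ^ 2 / 2 = h})
    (hreg : ∀ x : E × E, V x.1 + ‖x.2‖ ^ 2 / 2 = h → ¬(∇ V x.1 = 0 ∧ x.2 = 0))
    (hmeet : ∃ q₀, V q₀ = h) :
    ∃ l : ℝ, 0 < l ∧ ∃ q : ℝ → E,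
      ContDiffOn ℝ 2 q (Icc 0 l) ∧
      (∃ t ∈ Icc 0 l, q t ≠ q 0) ∧
      (∀ t ∈ Icc 0 l, derivWithin (derivWithin q (Icc 0 l)) (Icc 0 l) t = -∇ V (q t)) ∧
      derivWithin q (Icc 0 l) 0 = 0 ∧
      derivWithin q (Icc 0 l) l = 0 ∧
      V (q 0) + ‖derivWithin q (Icc 0 l) 0‖ ^ 2 / 2 = h := by
  have hreg' : ∀ x, V x = h → ∇ V x ≠ 0 := fun x hx h0 => hreg (x, 0) (by simpa) ⟨h0, rfl⟩
  have : Nontrivial E := hmeet.elim fun q₀ hq₀ => ⟨_, _, hreg' q₀ hq₀⟩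
  obtain ⟨l, q, w, hq⟩ := exists_isBrakeOrbit_of_isBounded_sublevel hV
    (isBounded_sublevel_of_isCompact_energy_level hcompact) hreg' hmeet
  have hzero := hq.derivWithin_eq hq.zero_mem
  refine ⟨l, hq.length_pos, q, hq.contDiffOn (contDiff_gradient hV).continuous,
    hq.exists_apply_ne_apply_zero, fun t => hq.derivWithin_derivWithin_eq,
    hzero.trans hq.velocity_zero, ?_, hzero ▸ hq.energy_eq 0 hq.zero_mem⟩
  exact (hq.derivWithin_eq (right_mem_Icc.mpr hq.length_pos.le)).trans hq.velocity_length

end BrakeOrbit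

/-- **Existence of brake orbits (Bolotin), Euclidean case.**
If the energy level `S_h = {(q,p) | V q + ‖p‖²/2 = h}` is compact, regular, and meets
the zero section, then there is a nonconstant solution of Newton's equation
`q'' = -∇V(q)` starting and ending with zero velocity on the energy level `h`. -/
theorem brake_orbit_exists
    (n : ℕ) (hn : 1 ≤ n)
    (V : EuclideanSpace ℝ (Fin n) → ℝ) (hV : ContDiff ℝ (⊤ : ℕ∞) V) (h : ℝ)
    (hcompact : IsCompact
      {x : EuclideanSpace ℝ (Fin n) × EuclideanSpace ℝ (Fin n) | V x.1 + ‖x.2‖ ^ 2 / 2 = h})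
    (hreg : ∀ x : EuclideanSpace ℝ (Fin n) × EuclideanSpace ℝ (Fin n),
      V x.1 + ‖x.2‖ ^ 2 / 2 = h → ¬(gradient V x.1 = 0 ∧ x.2 = 0))
    (hmeet : ∃ q₀ : EuclideanSpace ℝ (Fin n), V q₀ = h) :
    ∃ l : ℝ, 0 < l ∧ ∃ q : ℝ → EuclideanSpace ℝ (Fin n),
      ContDiffOn ℝ 2 q (Icc 0 l) ∧
      (∃ t ∈ Icc (0:ℝ) l, q t ≠ q 0) ∧
      (∀ t ∈ Icc (0:ℝ) l,
        derivWithin (derivWithin q (Icc 0 l)) (Icc 0 l) t = -gradient V (q t)) ∧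
      derivWithin q (Icc 0 l) 0 = 0 ∧
      derivWithin q (Icc 0 l) l = 0 ∧
      V (q 0) + ‖derivWithin q (Icc 0 l) 0‖ ^ 2 / 2 = h :=
  brake_orbit_exists_general (contDiff_infty.mp hV 2) hcompact hreg hmeet
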